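/- Let S = K[x_1,…,x_n]. For any Cohen-Macaulay standard graded K-algebra A with dim_K A_1 ≤ n, there is a stable monomial ideal J ⊂ S such that S/J is Cohen-Macaulay and S/J has the same Hilbert series as A. -/

import Mathlib

open MvPolynomial

set_option synthInstance.maxHeartbeats 1000000
set_option maxHeartbeats 1000000

/-- A *stable* monomial ideal of `S = K[x₁,…,x_n]`: a monomial ideal `I` such that for every
monomial `m ∈ I`, letting `jmax = max(m)` be the largest index of a variable dividing `m`,
one has `m · (x_i / x_{jmax}) ∈ I` for every `i < jmax`. -/
def IsStableMonomialIdeal {K : Type*} [CommSemiring K] {n : ℕ}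
    (I : Ideal (MvPolynomial (Fin n) K)) : Prop :=
  (∃ M : Set (Fin n →₀ ℕ),
      I = Ideal.span ((fun m => (monomial m (1 : K) : MvPolynomial (Fin n) K)) '' M)) ∧
    ∀ m : Fin n →₀ ℕ, (monomial m (1 : K) : MvPolynomial (Fin n) K) ∈ I →
      ∀ jmax : Fin n, m jmax ≠ 0 → (∀ j, jmax < j → m j = 0) →
        ∀ i : Fin n, i < jmax →
          (monomial (m + Finsupp.single i 1 - Finsupp.single jmax 1) (1 : K) :
            MvPolynomial (Fin n) K) ∈ I

/-!
Let `θ` be a linear system of parameters of `A`; it exists because an infinite field allows one to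
avoid the relevant minimal primes inside `A₁`. As `θ` is regular, `Hilb(A) (1 - t)^d` is the Hilbert
series of the Artinian algebra `B = A/(θ)`, whose degree-one part has dimension at most `m = n - d`.
The standard monomials of a presentation of `B` form a finite order ideal with the same number of
elements in each degree. Compressing it along pairs of coordinates makes it closed under replacing
a variable by a later one, so that its complement spans a stable ideal `J₀` of `K[x₁, …, x_m]` whose
quotient has the Hilbert function of `B`. The extension `J` of `J₀` to `S = K[x₁, …, x_n]` is still
stable, and the new variables form a regular sequence modulo `J`, so `Hilb(S/J) (1 - t)^d` is
`Hilb(B)` as well. A linear change of coordinates fixing `J` carries the new variables to any given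
linear system of parameters of `S/J`, which is therefore regular.
-/

/-! ### Compression of finite order ideals of monomials -/

section Compression

variable {ι : Type*}

/-- The exponent vector on the line through `u` in direction `e_j - e_i` whose `i`-th entry is
`a`. The truncated subtraction is harmless as long as `a ≤ u i + u j`. -/
noncomputable def slide (i j : ι) (u : ι →₀ ℕ) (a : ℕ) : ι →₀ ℕ :=
  (u.update j (u i + u j - a)).update i a

variable {i j : ι}

@[simp]
lemma slide_apply_left (u : ι →₀ ℕ) (a : ℕ) : slide i j u a i = a := by
  classical simp [slide, Finsupp.update_apply]

lemma slide_apply_right (hij : i ≠ j) (u : ι →₀ ℕ) (a : ℕ) :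
    slide i j u a j = u i + u j - a := by
  classical simp [slide, Finsupp.update_apply, hij.symm]

lemma slide_apply_of_ne {l : ι} (hi : l ≠ i) (hj : l ≠ j) (u : ι →₀ ℕ) (a : ℕ) :
    slide i j u a l = u l := by
  classical simp [slide, Finsupp.update_apply, hi, hj]

lemma slide_ext {u w : ι →₀ ℕ} {a : ℕ} (hi : w i = a) (hj : w j = u i + u j - a)
    (h : ∀ l, l ≠ i → l ≠ j → w l = u l) : slide i j u a = w := by
  classical
  ext l
  rcases eq_or_ne l i with rfl | hli
  · simp [hi]
  rcases eq_or_ne l j with rfl | hlj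
  · rw [slide_apply_right hli.symm, hj]
  · rw [slide_apply_of_ne hli hlj, h l hli hlj]

@[simp]
lemma slide_self (u : ι →₀ ℕ) : slide i j u (u i) = u :=
  slide_ext rfl (by omega) fun _ _ _ => rfl

lemma slide_slide (hij : i ≠ j) {u : ι →₀ ℕ} {a : ℕ} (ha : a ≤ u i + u j) (b : ℕ) :
    slide i j (slide i j u a) b = slide i j u b :=
  slide_ext (slide_apply_left ..) (by simp only [slide_apply_left, slide_apply_right hij]; omega)
    fun l hi hj => by simp only [slide_apply_of_ne hi hj]

lemma slide_add_single (hij : i ≠ j) {u : ι →₀ ℕ} {a : ℕ} (ha : a ≤ u i) :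
    slide i j u a + Finsupp.single i (u i - a) = u + Finsupp.single j (u i - a) := by
  classical
  ext l
  rcases eq_or_ne l i with rfl | hli
  · simp [hij.symm, ha]
  rcases eq_or_ne l j with rfl | hlj
  · simp only [Finsupp.add_apply, slide_apply_right hij, Finsupp.single_apply, if_neg hij, if_true]
    omega
  · simp [slide_apply_of_ne hli hlj, hli, hlj]

lemma slide_le_slide (hij : i ≠ j) {u w : ι →₀ ℕ} {a b : ℕ} (hab : a ≤ b)
    (h_right : u i + u j - a ≤ w i + w j - b) (h : ∀ l, l ≠ i → l ≠ j → u l ≤ w l) :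
    slide i j u a ≤ slide i j w b := by
  intro l
  rcases eq_or_ne l i with rfl | hli
  · simpa using hab
  rcases eq_or_ne l j with rfl | hlj
  · simpa only [slide_apply_right hij] using h_right
  · simpa only [slide_apply_of_ne hli hlj] using h l hli hlj

lemma isLowerSet_of_add_single_mem {s : Set (ι →₀ ℕ)}
    (hs : ∀ w l, w + Finsupp.single l 1 ∈ s → w ∈ s) : IsLowerSet s := by
  have mem_of_add_mem (c : ι →₀ ℕ) : ∀ w, w + c ∈ s → w ∈ s := by
    induction c using Finsupp.induction_linear with
    | zero => simp
    | add f g hf hg => exact fun w hw => hf w (hg _ (by rwa [add_assoc]))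
    | single l a =>
      induction a with
      | zero => simp
      | succ a ih => exact fun w hw => ih w (hs _ l (by rwa [add_assoc, ← Finsupp.single_add]))
  intro v w hwv hv
  obtain ⟨c, rfl⟩ := exists_add_of_le hwv
  exact mem_of_add_mem c w hv

lemma count_eq_or_count_succ_le {P Q : ℕ → Prop} [DecidablePred P] [DecidablePred Q] {s : ℕ}
    (h : ∀ a < s, P a → Q a) (h_succ : ∀ a < s, P (a + 1) → Q a) :
    Nat.count Q s = s ∨ Nat.count P (s + 1) ≤ Nat.count Q s := by
  induction s with
  | zero => simp
  | succ s ih =>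
    have ih := ih (fun a ha => h a (by omega)) fun a ha => h_succ a (by omega)
    have hP := Nat.count_le (p := P) (n := s)
    have := h s (by omega)
    have := h_succ s (by omega)
    simp only [Nat.count_succ] at ih ⊢
    grind

lemma exists_count_eq {P : ℕ → Prop} [DecidablePred P] {N t : ℕ} (h : t < Nat.count P N) :
    ∃ a < N, P a ∧ Nat.count P a = t := by
  have ht (hf : (Set.ofPred P).Finite) : t < hf.toFinset.card :=
    h.trans_le (by
      rw [Nat.count_eq_card_filter_range]
      exact Finset.card_le_card fun a ha => by simpa using (Finset.mem_filter.1 ha).2)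
  exact ⟨Nat.nth P t, Nat.nth_lt_of_lt_count h, Nat.nth_mem t ht, Nat.count_nth ht⟩

variable [DecidableEq ι]

/-- Compression of `F` towards `e_j`: on every line in direction `e_j - e_i` the points of `F`
are moved, in order, to the points of the line with `i`-th entry `0, 1, 2, …`. -/
noncomputable def compress (F : Finset (ι →₀ ℕ)) (i j : ι) (u : ι →₀ ℕ) : ι →₀ ℕ :=
  slide i j u (Nat.count (fun a => slide i j u a ∈ F) (u i))

variable {F : Finset (ι →₀ ℕ)}

lemma compress_slide (hij : i ≠ j) {u : ι →₀ ℕ} {a : ℕ} (ha : a ≤ u i + u j) :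
    compress F i j (slide i j u a) =
      slide i j u (Nat.count (fun b => slide i j u b ∈ F) a) := by
  simp only [compress, slide_slide hij ha, slide_apply_left]

lemma mem_image_compress (hij : i ≠ j) {w : ι →₀ ℕ} :
    w ∈ F.image (compress F i j) ↔
      w i < Nat.count (fun a => slide i j w a ∈ F) (w i + w j + 1) := by
  rw [Finset.mem_image]
  constructor
  · rintro ⟨u, hu, rfl⟩
    have h_le : Nat.count (fun a => slide i j u a ∈ F) (u i) ≤ u i := Nat.count_le _
    simp only [compress, slide_apply_left, slide_apply_right hij,
      slide_slide hij (h_le.trans (Nat.le_add_right _ (u j)))]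
    calc Nat.count (fun a => slide i j u a ∈ F) (u i)
        < Nat.count (fun a => slide i j u a ∈ F) (u i + 1) :=
          Nat.count_strict_mono (by simpa using hu) (Nat.lt_succ_self _)
      _ ≤ _ := Nat.count_monotone _ (by omega)
  · intro h
    obtain ⟨a, ha, h_mem, h_count⟩ := exists_count_eq h
    exact ⟨slide i j w a, h_mem, by rw [compress_slide hij (by omega), h_count, slide_self]⟩

lemma injOn_compress (hij : i ≠ j) : Set.InjOn (compress F i j) F := by
  intro u hu v hv huv
  have hu_le : Nat.count (fun a => slide i j u a ∈ F) (u i) ≤ u i := Nat.count_le _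
  have hv_le : Nat.count (fun a => slide i j v a ∈ F) (v i) ≤ v i := Nat.count_le _
  have h_slide (a : ℕ) : slide i j u a = slide i j v a := by
    rw [← slide_slide hij (hu_le.trans (Nat.le_add_right _ _)), ← compress, huv, compress,
      slide_slide hij (hv_le.trans (Nat.le_add_right _ _))]
  have h_count := DFunLike.congr_fun huv i
  simp only [compress, slide_apply_left, h_slide] at h_count
  have huv_i : u i = v i := by
    refine Nat.count_injective (p := fun a => slide i j v a ∈ F) ?_ (by simpa using hv) h_count
    rw [← h_slide]
    simpa using hu
  rw [← slide_self (i := i) (j := j) u, h_slide, huv_i, slide_self]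

lemma map_compress_add {M : Type*} [AddCommMonoid M] (hij : i ≠ j) (f : (ι →₀ ℕ) →+ M)
    (u : ι →₀ ℕ) :
    ∃ c, c + compress F i j u i = u i ∧
      f (compress F i j u) + c • f (Finsupp.single i 1) = f u + c • f (Finsupp.single j 1) := by
  have h_le : Nat.count (fun a => slide i j u a ∈ F) (u i) ≤ u i := Nat.count_le _
  refine ⟨u i - Nat.count (fun a => slide i j u a ∈ F) (u i), ?_, ?_⟩
  · simp only [compress, slide_apply_left]
    omega
  · simpa only [← map_nsmul, ← map_add, Finsupp.smul_single, smul_eq_mul, mul_one, compress]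
      using congrArg f (slide_add_single hij h_le)

lemma degree_compress (hij : i ≠ j) (u : ι →₀ ℕ) :
    (compress F i j u).degree = u.degree := by
  obtain ⟨c, -, hc⟩ := map_compress_add (F := F) hij Finsupp.degree u
  simpa using hc

lemma weight_le_weight_compress {w : ι → ℕ} (hw : w i < w j) (u : ι →₀ ℕ) :
    Finsupp.weight w u ≤ Finsupp.weight w (compress F i j u) := by
  obtain ⟨c, -, hc⟩ := map_compress_add (F := F) (ne_of_apply_ne w hw.ne) (Finsupp.weight w) u
  simp only [Finsupp.weight_single, smul_eq_mul, one_mul] at hc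
  have := Nat.mul_le_mul_left c hw.le
  omega

lemma weight_lt_weight_compress {w : ι → ℕ} (hw : w i < w j) {u : ι →₀ ℕ}
    (hu : u + Finsupp.single j 1 ∉ F) :
    Finsupp.weight w (u + Finsupp.single i 1) <
      Finsupp.weight w (compress F i j (u + Finsupp.single i 1)) := by
  have hij : i ≠ j := ne_of_apply_ne w hw.ne
  obtain ⟨c, h_add, hc⟩ :=
    map_compress_add (F := F) hij (Finsupp.weight w) (u + Finsupp.single i 1)
  have h_slide : slide i j (u + Finsupp.single i 1) (u i) = u + Finsupp.single j 1 :=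
    slide_ext (by simp [hij]) (by grind [Finsupp.add_apply])
      fun l hi hj => by simp [hi, hj]
  have h_lt : compress F i j (u + Finsupp.single i 1) i < u i + 1 := by
    rw [compress, slide_apply_left, Finsupp.add_apply, Finsupp.single_eq_same, Nat.count_succ,
      if_neg (by rwa [h_slide]), add_zero]
    exact Nat.lt_succ_of_le (Nat.count_le _)
  simp only [Finsupp.weight_single, smul_eq_mul, one_mul, Finsupp.add_apply,
    Finsupp.single_eq_same] at hc h_add
  have := Nat.mul_lt_mul_of_pos_left hw (show 0 < c by omega)
  omega

lemma isLowerSet_image_compress (hij : i ≠ j) (hF : IsLowerSet (F : Set (ι →₀ ℕ))) :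
    IsLowerSet (F.image (compress F i j) : Set (ι →₀ ℕ)) := by
  refine isLowerSet_of_add_single_mem fun w l hw => ?_
  rw [Finset.mem_coe, mem_image_compress hij] at hw ⊢
  set v := w + Finsupp.single l 1 with hv
  have h_le : w ≤ v := le_self_add
  have h_sub {a b : ℕ} (hab : a ≤ b) (h : w i + w j - a ≤ v i + v j - b)
      (hb : slide i j v b ∈ F) : slide i j w a ∈ F :=
    hF (slide_le_slide hij hab h fun l _ _ => h_le l) hb
  by_cases hl : l = i ∨ l = j
  · have h_sum : v i + v j = w i + w j + 1 := by
      rcases hl with rfl | rfl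
      · simp [hv, hij.symm, add_right_comm]
      · simp [hv, hij, add_assoc]
    rw [h_sum] at hw
    -- The line through `v` is one step longer than the one through `w`, and both neighbours of
    -- a point of `v`'s line that lies in `F` lie in `F` as points of `w`'s line.
    obtain h_full | h_count := count_eq_or_count_succ_le
      (P := fun a => slide i j v a ∈ F) (Q := fun a => slide i j w a ∈ F) (s := w i + w j + 1)
      (fun a _ => h_sub le_rfl (by omega)) (fun a _ => h_sub a.le_succ (by omega))
    · omega
    · exact (h_le i).trans_lt (hw.trans_le h_count)
  · have h_left : v i = w i := by simp [hv, not_or.1 hl]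
    have h_right : v j = w j := by simp [hv, not_or.1 hl]
    rw [h_left, h_right] at hw
    exact hw.trans_le (Nat.count_mono_left fun a _ => h_sub le_rfl (by rw [h_left, h_right]))

end Compression

section Costable

open scoped Finset

variable {ι : Type*}

/-- A set of exponent vectors is costable if it is closed under replacing a variable by a later
one, i.e. if the monomials outside it are closed under replacing a variable by an earlier one. -/
def IsCostable [LT ι] (s : Set (ι →₀ ℕ)) : Prop :=
  ∀ u i j, i < j → u + Finsupp.single i 1 ∈ s → u + Finsupp.single j 1 ∈ s

lemma finite_setOf_card_degree_eq [Finite ι] (F : Finset (ι →₀ ℕ)) :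
    {G : Finset (ι →₀ ℕ) | ∀ k, #{u ∈ G | u.degree = k} = #{u ∈ F | u.degree = k}}.Finite := by
  have := Finsupp.finite_of_degree_le (σ := ι) (F.sup Finsupp.degree)
  refine this.toFinset.powerset.finite_toSet.subset fun G hG => ?_
  simp only [Finset.mem_coe, Finset.mem_powerset]
  intro u hu
  obtain ⟨v, hv⟩ : {v ∈ F | v.degree = u.degree}.Nonempty := by
    rw [← Finset.card_pos, ← hG]
    exact Finset.card_pos.2 ⟨u, by simp [hu]⟩
  rw [Finset.mem_filter] at hv
  simpa [hv.2] using Finset.le_sup (f := Finsupp.degree) hv.1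

lemma exists_isCostable_card_eq [Finite ι] [Preorder ι] {w : ι → ℕ} (hw : StrictMono w)
    {F : Finset (ι →₀ ℕ)} (hF : IsLowerSet (F : Set (ι →₀ ℕ))) :
    ∃ G : Finset (ι →₀ ℕ), IsLowerSet (G : Set (ι →₀ ℕ)) ∧ IsCostable (G : Set (ι →₀ ℕ)) ∧
      ∀ k, #{u ∈ G | u.degree = k} = #{u ∈ F | u.degree = k} := by
  classical
  obtain ⟨G, ⟨hG_lower, hG_card⟩, hG_max⟩ := Set.exists_max_image
    {G : Finset (ι →₀ ℕ) | IsLowerSet (G : Set (ι →₀ ℕ)) ∧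
      ∀ k, #{u ∈ G | u.degree = k} = #{u ∈ F | u.degree = k}}
    (fun G => ∑ u ∈ G, Finsupp.weight w u)
    ((finite_setOf_card_degree_eq F).subset fun _ hG => hG.2) ⟨F, hF, fun _ => rfl⟩
  refine ⟨G, hG_lower, fun u i j hij hu => ?_, hG_card⟩
  by_contra hu'
  have h_inj : Set.InjOn (compress G i j) G := injOn_compress hij.ne
  have h_card (k : ℕ) :
      #{u ∈ G.image (compress G i j) | u.degree = k} = #{u ∈ F | u.degree = k} := by
    rw [← hG_card k, Finset.filter_image,
      Finset.card_image_of_injOn (h_inj.mono (Finset.filter_subset _ _))]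
    simp only [degree_compress hij.ne]
  have h_le := hG_max _ ⟨isLowerSet_image_compress hij.ne hG_lower, h_card⟩
  rw [Finset.sum_image h_inj] at h_le
  exact h_le.not_gt (Finset.sum_lt_sum (fun u _ => weight_le_weight_compress (hw hij) u)
    ⟨_, hu, weight_lt_weight_compress (hw hij) hu'⟩)

end Costable

/-! ### Standard monomials -/

section StandardMonomials

section Greedy

variable {K V ι : Type*} [DivisionRing K] [AddCommGroup V] [Module K V] [LinearOrder ι]

lemma linearIndepOn_setOf_notMem_span (v : ι → V) (t : Set ι) :
    LinearIndepOn K v {i ∈ t | v i ∉ Submodule.span K (v '' (t ∩ Set.Iio i))} := by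
  refine linearIndepOn_of_finite _ fun s hs hs_fin => ?_
  obtain ⟨s, rfl⟩ := hs_fin.exists_finset_coe
  induction s using Finset.induction_on_max with
  | empty => simp [linearIndepOn_empty]
  | insert a s h_max ih =>
    rw [Finset.coe_insert, Set.insert_subset_iff] at hs
    rw [Finset.coe_insert]
    exact (ih hs.2 s.finite_toSet).insert fun h => hs.1.2 <|
      Submodule.span_mono (Set.image_mono fun x hx => (⟨(hs.2 hx).1, h_max x hx⟩ : _ ∧ _)) h

lemma span_image_setOf_notMem_span [WellFoundedLT ι] (v : ι → V) (t : Set ι) :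
    Submodule.span K (v '' {i ∈ t | v i ∉ Submodule.span K (v '' (t ∩ Set.Iio i))}) =
      Submodule.span K (v '' t) := by
  refine (Submodule.span_mono (Set.image_mono fun _ hi => hi.1)).antisymm ?_
  rw [Submodule.span_le]
  rintro _ ⟨i, hi, rfl⟩
  induction i using WellFoundedLT.induction with
  | ind i ih =>
    by_cases h : v i ∈ Submodule.span K (v '' (t ∩ Set.Iio i))
    · refine Submodule.span_le.2 ?_ h
      rintro _ ⟨j, ⟨hjt, hji⟩, rfl⟩
      exact ih j hji hjt
    · exact Submodule.subset_span ⟨i, ⟨hi, h⟩, rfl⟩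

end Greedy

lemma finrank_span_image {R V ι : Type*} [Semiring R] [StrongRankCondition R] [AddCommMonoid V]
    [Module R V] {v : ι → V} {s : Set ι} (hv : LinearIndepOn R v s) :
    Module.finrank R (Submodule.span R (v '' s)) = s.ncard := by
  rw [Set.image_eq_range, Module.finrank_eq_nat_card_basis (Module.Basis.span hv),
    Nat.card_coe_set_eq]

variable {σ K B : Type*} [LinearOrder σ] [Field K] [CommRing B] [Algebra K B]

/-- The exponents of Macaulay's standard monomials for `f : K[x] → B`: those monomials whose image
is not a linear combination of images of lexicographically smaller monomials of the same degree. -/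
def standardExponents (f : MvPolynomial σ K →ₐ[K] B) : Set (σ →₀ ℕ) :=
  {u | f (monomial u 1) ∉ Submodule.span K
    ((fun w => f (monomial w 1)) '' {w | w.degree = u.degree ∧ toLex w < toLex u})}

lemma isLowerSet_standardExponents (f : MvPolynomial σ K →ₐ[K] B) :
    IsLowerSet (standardExponents f) := by
  intro u u' h_le hu hu'
  obtain ⟨c, rfl⟩ := exists_add_of_le h_le
  have h_mul (w : σ →₀ ℕ) :
      f (monomial c 1) * f (monomial w 1) = f (monomial (w + c) 1) := by
    rw [← map_mul, monomial_mul, one_mul, add_comm]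
  have h_mem := Submodule.mem_map_of_mem (f := LinearMap.mulLeft K (f (monomial c 1))) hu'
  rw [Submodule.map_span, LinearMap.mulLeft_apply, h_mul] at h_mem
  refine hu (Submodule.span_mono ?_ h_mem)
  rintro _ ⟨_, ⟨w, ⟨h_deg, h_lt⟩, rfl⟩, rfl⟩
  refine ⟨w + c, ⟨by simp [h_deg], ?_⟩, (h_mul w).symm⟩
  rw [toLex_add, toLex_add]
  exact add_lt_add_left h_lt _

lemma map_homogeneousSubmodule_eq_span {σ : Type*} (f : MvPolynomial σ K →ₐ[K] B) (k : ℕ) :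
    (homogeneousSubmodule σ K k).map f.toLinearMap =
      Submodule.span K ((fun u => f (monomial u 1)) '' {u | u.degree = k}) := by
  rw [homogeneousSubmodule_eq_finsupp_supported, ← restrictSupport, restrictSupport_eq_span,
    Submodule.map_span, Set.image_image]
  rfl

lemma ncard_standardExponents [Finite σ] (f : MvPolynomial σ K →ₐ[K] B) (k : ℕ) :
    {u ∈ standardExponents f | u.degree = k}.ncard =
      Module.finrank K ((homogeneousSubmodule σ K k).map f.toLinearMap) := by
  let v (u : Lex (σ →₀ ℕ)) : B := f (monomial (ofLex u) 1)
  let t : Set (Lex (σ →₀ ℕ)) := {u | (ofLex u).degree = k}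
  have h_std : toLex '' {u ∈ standardExponents f | u.degree = k} =
      {u ∈ t | v u ∉ Submodule.span K (v '' (t ∩ Set.Iio u))} := by
    have h_below (u) (hu : u ∈ t) : v '' (t ∩ Set.Iio u) = (fun w => f (monomial w 1)) ''
        {w | w.degree = (ofLex u).degree ∧ toLex w < u} := by
      rw [show (ofLex u).degree = k from hu]
      rfl
    ext u
    constructor
    · rintro ⟨u, ⟨hu, hk⟩, rfl⟩
      exact ⟨hk, by rwa [h_below (toLex u) hk]⟩
    · rintro ⟨hk, hu⟩
      exact ⟨ofLex u, ⟨by rwa [h_below u hk] at hu, hk⟩, rfl⟩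
  rw [map_homogeneousSubmodule_eq_span, ← Set.ncard_image_of_injective _ toLex.injective, h_std,
    ← finrank_span_image (linearIndepOn_setOf_notMem_span v t), span_image_setOf_notMem_span]
  rfl

end StandardMonomials

/-! ### Hilbert series of quotients of a graded algebra -/

section HilbertSeries

open RingTheory.Sequence
open scoped Pointwise

lemma ofList_ofFn {A : Type*} [CommRing A] {d : ℕ} (θ : Fin d → A) :
    Ideal.ofList (List.ofFn θ) = Ideal.span (Set.range θ) := by
  rw [Ideal.ofList]
  congr 1
  ext r
  exact List.mem_ofFn

lemma isWeaklyRegular_quotient_cons_iff {A : Type*} [CommRing A] (I : Ideal A) (r : A)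
    (rs : List A) :
    IsWeaklyRegular (A ⧸ I) (r :: rs) ↔
      IsSMulRegular (A ⧸ I) r ∧ IsWeaklyRegular (A ⧸ (I ⊔ Ideal.span {r})) rs := by
  have h_smul : r • (⊤ : Submodule A (A ⧸ I)) = Submodule.map I.mkQ (Ideal.span {r}) := by
    rw [← Submodule.ideal_span_singleton_smul, ← I.range_mkQ, LinearMap.range_eq_map,
      ← Submodule.map_smul'', smul_eq_mul, Ideal.mul_top]
  let e : QuotSMulTop r (A ⧸ I) ≃ₗ[A] A ⧸ (I ⊔ Ideal.span {r}) :=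
    (Submodule.quotEquivOfEq _ _ h_smul).trans
      (Submodule.quotientQuotientEquivQuotientSup I (Ideal.span {r}))
  rw [isWeaklyRegular_cons_iff, e.isWeaklyRegular_congr rs]

lemma finrank_map_add_finrank_inf_ker {K V W : Type*} [DivisionRing K] [AddCommGroup V]
    [Module K V] [AddCommGroup W] [Module K W] (f : V →ₗ[K] W) (p : Submodule K V)
    [FiniteDimensional K p] :
    Module.finrank K (p.map f) + Module.finrank K ↥(p ⊓ LinearMap.ker f) =
      Module.finrank K p := by
  rw [← LinearMap.finrank_range_add_finrank_ker (f.domRestrict p), LinearMap.range_domRestrict,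
    LinearMap.ker_domRestrict, ← Submodule.map_comap_subtype, Submodule.finrank_map_subtype_eq]

variable {K A : Type*} [Field K] [CommRing A] [Algebra K A]

/-- The degree `k` component of the quotient `A ⧸ I`, i.e. the image of `𝒜 k`. -/
def quotientGrading (𝒜 : ℕ → Submodule K A) (I : Ideal A) (k : ℕ) : Submodule K (A ⧸ I) :=
  (𝒜 k).map (Ideal.Quotient.mkₐ K I).toLinearMap

/-- The Hilbert series of `A ⧸ I`, with integer coefficients so that it can be multiplied by
`1 - X`. -/
noncomputable def hilbertSeries (𝒜 : ℕ → Submodule K A) (I : Ideal A) : PowerSeries ℤ :=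
  PowerSeries.mk fun k => (Module.finrank K (quotientGrading 𝒜 I k) : ℤ)

@[simp]
lemma coeff_hilbertSeries (𝒜 : ℕ → Submodule K A) (I : Ideal A) (k : ℕ) :
    PowerSeries.coeff k (hilbertSeries 𝒜 I) = Module.finrank K (quotientGrading 𝒜 I k) :=
  PowerSeries.coeff_mk _ _

instance (𝒜 : ℕ → Submodule K A) (I : Ideal A) (k : ℕ) [FiniteDimensional K (𝒜 k)] :
    FiniteDimensional K (quotientGrading 𝒜 I k) :=
  Module.Finite.map _ _

lemma map_factor_quotientGrading (𝒜 : ℕ → Submodule K A) {I J : Ideal A} (h : I ≤ J) (k : ℕ) :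
    (quotientGrading 𝒜 I k).map (Ideal.Quotient.factorₐ K h).toLinearMap =
      quotientGrading 𝒜 J k := by
  rw [quotientGrading, ← Submodule.map_comp]
  rfl

lemma hilbertSeries_bot (𝒜 : ℕ → Submodule K A) :
    hilbertSeries 𝒜 ⊥ = PowerSeries.mk fun k => (Module.finrank K (𝒜 k) : ℤ) := by
  have h_inj : Function.Injective (Ideal.Quotient.mkₐ K (⊥ : Ideal A)).toLinearMap :=
    (injective_iff_map_eq_zero _).2 fun _ h => Ideal.Quotient.eq_zero_iff_mem.1 h
  ext k
  rw [coeff_hilbertSeries, PowerSeries.coeff_mk,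
    ((𝒜 k).equivMapOfInjective _ h_inj).finrank_eq, quotientGrading]

section Quotient

variable {𝒜 : ℕ → Submodule K A} [GradedAlgebra 𝒜] {I : Ideal A} {θ : A}

lemma mem_of_mem_sup_span_of_mem_zero (hI : I.IsHomogeneous 𝒜) (hθ : θ ∈ 𝒜 1) {x : A}
    (hx : x ∈ 𝒜 0) (h : x ∈ I ⊔ Ideal.span {θ}) : x ∈ I := by
  obtain ⟨g, hg, _, ht, rfl⟩ := Submodule.mem_sup.1 h
  obtain ⟨a, rfl⟩ := Ideal.mem_span_singleton.1 ht
  rw [← DirectSum.decompose_of_mem_same 𝒜 hx, DirectSum.decompose_add, DirectSum.add_apply,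
    Submodule.coe_add, DirectSum.coe_decompose_mul_of_left_mem_of_not_le 𝒜 hθ one_pos.not_ge,
    add_zero]
  exact hI 0 hg

lemma exists_sub_mul_mem_of_mem_sup_span (hI : I.IsHomogeneous 𝒜) (hθ : θ ∈ 𝒜 1) {k : ℕ} {x : A}
    (hx : x ∈ 𝒜 (k + 1)) (h : x ∈ I ⊔ Ideal.span {θ}) : ∃ a ∈ 𝒜 k, x - θ * a ∈ I := by
  obtain ⟨g, hg, _, ht, rfl⟩ := Submodule.mem_sup.1 h
  obtain ⟨a, rfl⟩ := Ideal.mem_span_singleton.1 ht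
  refine ⟨DirectSum.decompose 𝒜 a k, SetLike.coe_mem _, ?_⟩
  rw [← DirectSum.decompose_of_mem_same 𝒜 hx, DirectSum.decompose_add, DirectSum.add_apply,
    Submodule.coe_add, add_comm k 1, DirectSum.coe_decompose_mul_add_of_left_mem 𝒜 hθ,
    add_sub_cancel_right]
  exact hI _ hg

lemma finrank_quotientGrading_sup_span_zero (hI : I.IsHomogeneous 𝒜) (hθ : θ ∈ 𝒜 1) :
    Module.finrank K (quotientGrading 𝒜 (I ⊔ Ideal.span {θ}) 0) =
      Module.finrank K (quotientGrading 𝒜 I 0) := by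
  let q := (Ideal.Quotient.factorₐ K (le_sup_left : I ≤ I ⊔ Ideal.span {θ})).toLinearMap
  have h_disj : Disjoint (quotientGrading 𝒜 I 0) (LinearMap.ker q) := by
    rw [Submodule.disjoint_def]
    rintro _ ⟨x, hx, rfl⟩ h
    exact Ideal.Quotient.eq_zero_iff_mem.2 <|
      mem_of_mem_sup_span_of_mem_zero hI hθ hx (Ideal.Quotient.eq_zero_iff_mem.1 h)
  have h_inj : Function.Injective (q.domRestrict (quotientGrading 𝒜 I 0)) := by
    rwa [LinearMap.injective_domRestrict_iff]
  rw [← map_factor_quotientGrading 𝒜 le_sup_left, ← LinearMap.range_domRestrict,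
    LinearMap.finrank_range_of_inj h_inj]

lemma finrank_quotientGrading_succ (hI : I.IsHomogeneous 𝒜) (hθ : θ ∈ 𝒜 1)
    (h_reg : IsSMulRegular (A ⧸ I) θ) (k : ℕ) [FiniteDimensional K (𝒜 (k + 1))] :
    Module.finrank K (quotientGrading 𝒜 (I ⊔ Ideal.span {θ}) (k + 1)) +
      Module.finrank K (quotientGrading 𝒜 I k) =
        Module.finrank K (quotientGrading 𝒜 I (k + 1)) := by
  let q := (Ideal.Quotient.factorₐ K (le_sup_left : I ≤ I ⊔ Ideal.span {θ})).toLinearMap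
  let mulθ := Algebra.lsmul K K (A ⧸ I) θ
  have h_ker : quotientGrading 𝒜 I (k + 1) ⊓ LinearMap.ker q =
      (quotientGrading 𝒜 I k).map mulθ := by
    apply le_antisymm
    · rintro _ ⟨⟨x, hx, rfl⟩, h⟩
      obtain ⟨a, ha, hxa⟩ := exists_sub_mul_mem_of_mem_sup_span hI hθ hx
        (Ideal.Quotient.eq_zero_iff_mem.1 h)
      exact ⟨_, ⟨a, ha, rfl⟩, ((Ideal.Quotient.mk_eq_mk_iff_sub_mem _ _).2 hxa).symm⟩
    · rintro _ ⟨_, ⟨a, ha, rfl⟩, rfl⟩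
      refine ⟨⟨θ * a, add_comm 1 k ▸ SetLike.mul_mem_graded hθ ha, rfl⟩, ?_⟩
      exact Ideal.Quotient.eq_zero_iff_mem.2 <|
        Ideal.mul_mem_right _ _ (Ideal.mem_sup_right (Ideal.mem_span_singleton_self θ))
  rw [← map_factor_quotientGrading 𝒜 le_sup_left,
    ((quotientGrading 𝒜 I k).equivMapOfInjective mulθ h_reg).finrank_eq, ← h_ker,
    finrank_map_add_finrank_inf_ker]

lemma hilbertSeries_sup_span [∀ k, FiniteDimensional K (𝒜 k)] (hI : I.IsHomogeneous 𝒜)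
    (hθ : θ ∈ 𝒜 1) (h_reg : IsSMulRegular (A ⧸ I) θ) :
    hilbertSeries 𝒜 (I ⊔ Ideal.span {θ}) = (1 - PowerSeries.X) * hilbertSeries 𝒜 I := by
  ext k
  rw [sub_mul, one_mul, map_sub]
  cases k with
  | zero => simp [finrank_quotientGrading_sup_span_zero hI hθ]
  | succ k =>
    rw [PowerSeries.coeff_succ_X_mul, coeff_hilbertSeries, coeff_hilbertSeries,
      coeff_hilbertSeries, ← finrank_quotientGrading_succ hI hθ h_reg k]
    push_cast
    ring

lemma hilbertSeries_sup_ofList [∀ k, FiniteDimensional K (𝒜 k)] {rs : List A}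
    (hI : I.IsHomogeneous 𝒜) (hrs : ∀ r ∈ rs, r ∈ 𝒜 1) (h_reg : IsWeaklyRegular (A ⧸ I) rs) :
    hilbertSeries 𝒜 (I ⊔ Ideal.ofList rs) =
      (1 - PowerSeries.X) ^ rs.length * hilbertSeries 𝒜 I := by
  induction rs generalizing I with
  | nil => simp
  | cons r rs ih =>
    rw [List.forall_mem_cons] at hrs
    rw [isWeaklyRegular_quotient_cons_iff] at h_reg
    have h_sup : (I ⊔ Ideal.span {r}).IsHomogeneous 𝒜 :=
      hI.sup (Ideal.homogeneous_span 𝒜 _ (by simpa using ⟨1, hrs.1⟩))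
    rw [Ideal.ofList_cons, ← sup_assoc, ih h_sup hrs.2 h_reg.2,
      hilbertSeries_sup_span hI hrs.1 h_reg.1, List.length_cons, pow_succ, mul_assoc]

end Quotient

end HilbertSeries

section FiniteQuotient

variable {K A : Type*} [Field K] [CommRing A] [Algebra K A] {𝒜 : ℕ → Submodule K A} {I : Ideal A}

lemma quotientGrading_eq_pow (h𝒜 : ∀ k, 𝒜 k = 𝒜 1 ^ k) (I : Ideal A) (k : ℕ) :
    quotientGrading 𝒜 I k = quotientGrading 𝒜 I 1 ^ k := by
  rw [quotientGrading, h𝒜 k, Submodule.map_pow, quotientGrading]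

lemma iSupIndep_quotientGrading [GradedAlgebra 𝒜] (hI : I.IsHomogeneous 𝒜) :
    iSupIndep (quotientGrading 𝒜 I) := by
  refine iSupIndep_def.2 fun k => Submodule.disjoint_def.2 ?_
  rintro _ ⟨x, hx, rfl⟩ h
  simp only [quotientGrading, ← Submodule.map_iSup] at h
  obtain ⟨y, hy, hyx⟩ := h
  have hy_k : y ∈ LinearMap.ker (GradedAlgebra.proj 𝒜 k) := by
    refine (iSup₂_le fun j hj z hz => ?_ : ⨆ j, ⨆ (_ : j ≠ k), 𝒜 j ≤ _) hy
    exact DirectSum.decompose_of_mem_ne 𝒜 hz hj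
  have hxy : (DirectSum.decompose 𝒜 (y - x) k : A) ∈ I :=
    hI k ((Ideal.Quotient.mk_eq_mk_iff_sub_mem _ _).1 hyx)
  rw [DirectSum.decompose_sub, DirectSum.sub_apply, Submodule.coe_sub,
    DirectSum.decompose_of_mem_same 𝒜 hx, ← GradedAlgebra.proj_apply, LinearMap.mem_ker.1 hy_k,
    zero_sub, neg_mem_iff] at hxy
  exact Ideal.Quotient.eq_zero_iff_mem.2 hxy

lemma finite_setOf_quotientGrading_ne_bot [GradedAlgebra 𝒜] (hI : I.IsHomogeneous 𝒜)
    [FiniteDimensional K (A ⧸ I)] : {k | quotientGrading 𝒜 I k ≠ ⊥}.Finite :=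
  WellFoundedGT.finite_ne_bot_of_iSupIndep (iSupIndep_quotientGrading hI)

end FiniteQuotient

section Generators

open scoped Finset

variable {K B : Type*} [Field K] [CommRing B] [Algebra K B]

lemma finrank_one_eq_one [Nontrivial B] : Module.finrank K (1 : Submodule K B) = 1 := by
  rw [Submodule.one_eq_span, finrank_span_singleton one_ne_zero]

lemma exists_fin_span_range_eq {V : Type*} [AddCommGroup V] [Module K V] (D : Submodule K V)
    [FiniteDimensional K D] {m : ℕ} (hm : Module.finrank K D ≤ m) :
    ∃ b : Fin m → V, Submodule.span K (Set.range b) = D := by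
  let e := Fin.castLE hm
  let b₀ : Fin (Module.finrank K D) → V := D.subtype ∘ Module.finBasis K D
  refine ⟨Function.extend e b₀ 0, ?_⟩
  have h₀ : Submodule.span K (Set.range b₀) = D := by
    rw [Set.range_comp, ← Submodule.map_span, Module.Basis.span_eq, Submodule.map_subtype_top]
  rw [Set.range_extend (Fin.castLE_injective hm), Submodule.span_union, h₀, sup_eq_left,
    Submodule.span_le]
  rintro _ ⟨_, _, rfl⟩
  exact D.zero_mem

lemma map_aeval_homogeneousSubmodule {σ : Type*} (b : σ → B) (k : ℕ) :
    (homogeneousSubmodule σ K k).map (aeval (R := K) b).toLinearMap =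
      Submodule.span K (Set.range b) ^ k := by
  rw [← homogeneousSubmodule_one_pow, Submodule.map_pow, homogeneousSubmodule_one_eq_span_X,
    Submodule.map_span, ← Set.range_comp]
  congr 3
  ext i
  simp

lemma exists_isCostable_card_eq_finrank_pow {D : Submodule K B} [FiniteDimensional K D] {m : ℕ}
    (hm : Module.finrank K D ≤ m) (h_fin : {k | D ^ k ≠ ⊥}.Finite) :
    ∃ G : Finset (Fin m →₀ ℕ), IsLowerSet (G : Set (Fin m →₀ ℕ)) ∧
      IsCostable (G : Set (Fin m →₀ ℕ)) ∧
        ∀ k, #{u ∈ G | u.degree = k} = Module.finrank K ↥(D ^ k) := by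
  obtain ⟨b, rfl⟩ := exists_fin_span_range_eq D hm
  let s := standardExponents (aeval (R := K) b)
  have h_count (k : ℕ) : {u ∈ s | u.degree = k}.ncard =
      Module.finrank K ↥(Submodule.span K (Set.range b) ^ k) := by
    rw [ncard_standardExponents, map_aeval_homogeneousSubmodule]
  have h_slice (k : ℕ) : {u ∈ s | u.degree = k}.Finite :=
    (Finsupp.finite_of_degree_eq k).subset fun _ hu => hu.2
  have hs : s.Finite := by
    refine (h_fin.biUnion fun k _ => h_slice k).subset fun u hu => ?_
    refine Set.mem_biUnion (x := u.degree) (fun h_bot => ?_) ⟨hu, rfl⟩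
    have h_zero := h_count u.degree
    rw [h_bot, finrank_bot, Set.ncard_eq_zero (h_slice _)] at h_zero
    exact h_zero.subset ⟨hu, rfl⟩
  lift s to Finset (Fin m →₀ ℕ) using hs with F hF
  obtain ⟨G, hG_lower, hG, hGF⟩ := exists_isCostable_card_eq Fin.val_strictMono
    (hF ▸ isLowerSet_standardExponents (aeval (R := K) b) : IsLowerSet (F : Set (Fin m →₀ ℕ)))
  refine ⟨G, hG_lower, hG, fun k => ?_⟩
  rw [hGF, ← h_count, ← Set.ncard_coe_finset, Finset.coe_filter]
  rfl

end Generators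

/-! ### Quotients by monomial ideals -/

section MonomialIdeal

open RingTheory.Sequence

variable {σ R K : Type*} [CommRing R] [Field K]

lemma monomial_mem_span_monomial_iff [Nontrivial R] {s : Set (σ →₀ ℕ)} {u : σ →₀ ℕ} :
    monomial u (1 : R) ∈ Ideal.span ((fun v => monomial v (1 : R)) '' s) ↔ ∃ v ∈ s, v ≤ u := by
  classical
  simp [mem_ideal_span_monomial_image, support_monomial]

lemma isSMulRegular_X_quotient_span_monomial {s : Set (σ →₀ ℕ)} {j : σ} (hs : ∀ v ∈ s, v j = 0) :
    IsSMulRegular (MvPolynomial σ R ⧸ Ideal.span ((fun v => monomial v (1 : R)) '' s))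
      (X j : MvPolynomial σ R) := by
  rw [isSMulRegular_quotient_iff_mem_of_smul_mem]
  intro p hp
  rw [smul_eq_mul, mem_ideal_span_monomial_image] at hp
  rw [mem_ideal_span_monomial_image]
  intro u hu
  obtain ⟨v, hv, h_le⟩ := hp (Finsupp.single j 1 + u) <| by
    rwa [mem_support_iff, coeff_X_mul, ← mem_support_iff]
  refine ⟨v, hv, fun i => ?_⟩
  by_cases hij : i = j
  · simp [hij, hs v hv]
  · simpa [Finsupp.single_apply, Ne.symm hij] using h_le i

lemma span_monomial_sup_span_X (s : Set (σ →₀ ℕ)) (j : σ) :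
    Ideal.span ((fun v => monomial v (1 : R)) '' s) ⊔ Ideal.span {X j} =
      Ideal.span ((fun v => monomial v (1 : R)) '' insert (Finsupp.single j 1) s) := by
  rw [Set.image_insert_eq, Ideal.span_insert, sup_comm, X]

lemma span_monomial_sup_ofList_map_X (s : Set (σ →₀ ℕ)) (js : List σ) :
    Ideal.span ((fun v => monomial v (1 : R)) '' s) ⊔ Ideal.ofList (js.map X) =
      Ideal.span ((fun v => monomial v (1 : R)) ''
        (s ∪ (fun j => Finsupp.single j 1) '' {j | j ∈ js})) := by
  rw [Set.image_union, Ideal.span_union, Set.image_image, Ideal.ofList]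
  simp only [List.mem_map]
  rfl

lemma isWeaklyRegular_map_X_quotient_span_monomial {s : Set (σ →₀ ℕ)} {js : List σ}
    (h_nodup : js.Nodup) (hs : ∀ j ∈ js, ∀ v ∈ s, v j = 0) :
    IsWeaklyRegular (MvPolynomial σ R ⧸ Ideal.span ((fun v => monomial v (1 : R)) '' s))
      (js.map X : List (MvPolynomial σ R)) := by
  induction js generalizing s with
  | nil => exact IsWeaklyRegular.nil _ _
  | cons j js ih =>
    rw [List.nodup_cons] at h_nodup
    rw [List.forall_mem_cons] at hs
    rw [List.map_cons, isWeaklyRegular_quotient_cons_iff, span_monomial_sup_span_X]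
    refine ⟨isSMulRegular_X_quotient_span_monomial hs.1, ih h_nodup.2 fun i hi => ?_⟩
    rw [Set.forall_mem_insert]
    exact ⟨Finsupp.single_eq_of_ne (ne_of_mem_of_not_mem hi h_nodup.1), hs.2 i hi⟩

lemma linearIndepOn_mk_monomial (s : Set (σ →₀ ℕ)) :
    LinearIndepOn K
      (fun u => Ideal.Quotient.mkₐ K (Ideal.span ((fun v => monomial v (1 : K)) '' s))
        (monomial u 1)) {u | ∀ v ∈ s, ¬ v ≤ u} := by
  refine LinearIndependent.map (f := (Ideal.Quotient.mkₐ K _).toLinearMap)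
    ((basisMonomials σ K).linearIndependent.linearIndepOn _) ?_
  rw [Submodule.disjoint_def]
  intro p hp h_ker
  have h_supp : p ∈ restrictSupport K {u | ∀ v ∈ s, ¬ v ≤ u} := by
    rw [restrictSupport_eq_span, Set.image_eq_range]
    simpa only [coe_basisMonomials] using hp
  rw [← support_eq_empty, Finset.eq_empty_iff_forall_notMem]
  intro u hu
  obtain ⟨v, hv, h_le⟩ :=
    mem_ideal_span_monomial_image.1 (Ideal.Quotient.eq_zero_iff_mem.1 h_ker) u hu
  exact h_supp hu v hv h_le

lemma finrank_quotientGrading_span_monomial (s : Set (σ →₀ ℕ)) (k : ℕ) :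
    Module.finrank K (quotientGrading (homogeneousSubmodule σ K)
      (Ideal.span ((fun v => monomial v (1 : K)) '' s)) k) =
        {u : σ →₀ ℕ | u.degree = k ∧ ∀ v ∈ s, ¬ v ≤ u}.ncard := by
  rw [← finrank_span_image ((linearIndepOn_mk_monomial (K := K) s).mono fun _ hu => hu.2),
    quotientGrading, map_homogeneousSubmodule_eq_span]
  refine congrArg (fun p : Submodule K _ => Module.finrank K p) (le_antisymm ?_ ?_)
  · rw [Submodule.span_le]
    rintro _ ⟨u, hu, rfl⟩
    by_cases h : ∀ v ∈ s, ¬ v ≤ u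
    · exact Submodule.subset_span ⟨u, ⟨hu, h⟩, rfl⟩
    · have h_mem := (monomial_mem_span_monomial_iff (R := K)).2
        (by simpa using h : ∃ v ∈ s, v ≤ u)
      simp only [Ideal.Quotient.mkₐ_eq_mk, Ideal.Quotient.eq_zero_iff_mem.2 h_mem, SetLike.mem_coe,
        zero_mem]
  · exact Submodule.span_mono (Set.image_mono fun _ hu => hu.1)

/-- The monomial ideal generated by the monomials with exponent outside `s`; if `s` is a lower set,
then `s` is the set of exponents of the standard monomials. -/
noncomputable def complIdeal (K : Type*) [Field K] (s : Set (σ →₀ ℕ)) : Ideal (MvPolynomial σ K) :=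
  Ideal.span ((fun v => monomial v (1 : K)) '' sᶜ)

lemma monomial_mem_complIdeal_iff {s : Set (σ →₀ ℕ)} (hs : IsLowerSet s) {u : σ →₀ ℕ} :
    monomial u (1 : K) ∈ complIdeal K s ↔ u ∉ s := by
  rw [complIdeal, monomial_mem_span_monomial_iff]
  exact ⟨fun ⟨v, hv, h_le⟩ hu => hv (hs h_le hu), fun hu => ⟨u, hu, le_rfl⟩⟩

lemma radical_complIdeal {s : Set (σ →₀ ℕ)} (hs : s.Finite) (h_zero : 0 ∈ s) :
    (complIdeal K s).radical = RingHom.ker constantCoeff := by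
  apply le_antisymm
  · rw [(RingHom.ker_isPrime _).isRadical.radical_le_iff, complIdeal, Ideal.span_le]
    rintro _ ⟨v, hv, rfl⟩
    have hv0 : v ≠ 0 := fun h => hv (h ▸ h_zero)
    classical
    simp [RingHom.mem_ker, constantCoeff_monomial, hv0]
  · have h_vars : idealOfVars σ K ≤ (complIdeal K s).radical := by
      rw [Ideal.span_le, Set.range_subset_iff]
      intro i
      obtain ⟨k, hk⟩ := (hs.preimage (Finsupp.single_injective i).injOn).exists_notMem
      exact ⟨k, X_pow_eq_monomial (R := K) ▸ Ideal.subset_span (Set.mem_image_of_mem _ hk)⟩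
    refine le_trans (fun p hp => ?_) h_vars
    rw [← pow_one (idealOfVars σ K), mem_pow_idealOfVars_iff']
    intro u hu
    rwa [Finsupp.degree_eq_zero_iff _ |>.1 (Nat.lt_one_iff.1 hu)]

lemma isStableMonomialIdeal_complIdeal {n : ℕ} {s : Set (Fin n →₀ ℕ)} (h_lower : IsLowerSet s)
    (hs : IsCostable s) : IsStableMonomialIdeal (complIdeal K s) := by
  refine ⟨⟨sᶜ, rfl⟩, fun u hu j hj _ i hij => ?_⟩
  have h_le : Finsupp.single j 1 ≤ u := by
    rwa [Finsupp.single_le_iff, Nat.one_le_iff_ne_zero]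
  obtain ⟨w, rfl⟩ := exists_add_of_le h_le
  rw [monomial_mem_complIdeal_iff h_lower] at hu ⊢
  rw [add_assoc, add_tsub_cancel_left]
  exact fun hw => hu (by rw [add_comm]; exact hs _ i j hij hw)

end MonomialIdeal

/-! ### Adjoining variables to an Artinian quotient of a polynomial ring -/

section ExtendedIdeal

open RingTheory.Sequence

variable {K : Type*} [Field K] {m d : ℕ}

/-- The ideal `J₀ K[x₁, …, x_{m+d}]` generated by an ideal `J₀` of `K[x₁, …, x_m]`. The last `d`
variables are called the new ones. -/
noncomputable def extendedIdeal (d : ℕ) (J₀ : Ideal (MvPolynomial (Fin m) K)) :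
    Ideal (MvPolynomial (Fin (m + d)) K) :=
  J₀.map (rename (R := K) (Fin.castAdd d))

/-- The projection `K[x₁, …, x_{m+d}] → K[x_{m+1}, …, x_{m+d}]` that sets the old variables to
zero. -/
noncomputable def projNew (K : Type*) [Field K] (m d : ℕ) :
    MvPolynomial (Fin (m + d)) K →ₐ[K] MvPolynomial (Fin d) K :=
  aeval (Fin.append 0 X)

lemma projNew_rename_castAdd (p : MvPolynomial (Fin m) K) :
    projNew K m d (rename (Fin.castAdd d) p) = C (constantCoeff p) := by
  have h_zero : (Fin.append 0 X ∘ Fin.castAdd d : Fin m → MvPolynomial (Fin d) K) = 0 := by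
    ext i : 1
    simp
  rw [projNew, aeval_rename, h_zero, aeval_zero, algebraMap_eq]

lemma projNew_X_natAdd (j : Fin d) : projNew K m d (X (Fin.natAdd m j)) = X j := by
  simp [projNew]

lemma projNew_surjective : Function.Surjective (projNew K m d) := by
  intro p
  refine ⟨rename (Fin.natAdd m) p, ?_⟩
  rw [projNew, aeval_rename]
  convert aeval_X_left_apply p
  ext j : 1
  simp

variable {J₀ : Ideal (MvPolynomial (Fin m) K)}

lemma ker_projNew_le_radical_extendedIdeal (hJ₀ : ∀ i, X i ∈ J₀.radical) :
    RingHom.ker (projNew K m d) ≤ (extendedIdeal d J₀).radical := by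
  let π := Ideal.Quotient.mkₐ K (extendedIdeal d J₀).radical
  -- Modulo the radical, a polynomial only depends on its image under `projNew`.
  have h_comp : π = (π.comp (rename (Fin.natAdd m))).comp (projNew K m d) := by
    ext i
    refine Fin.addCases (fun i => ?_) (fun j => ?_) i
    · have h_mem : X (Fin.castAdd d i) ∈ (extendedIdeal d J₀).radical := by
        rw [← rename_X (R := K)]
        exact Ideal.map_radical_le _ (Ideal.mem_map_of_mem _ (hJ₀ i))
      simpa [projNew, π, Ideal.Quotient.eq_zero_iff_mem] using h_mem
    · simp [projNew]
  intro p hp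
  rw [← Ideal.Quotient.eq_zero_iff_mem, ← Ideal.Quotient.mkₐ_eq_mk K]
  exact (DFunLike.congr_fun h_comp p).trans <| by
    rw [AlgHom.comp_apply, RingHom.mem_ker.1 hp, map_zero]

lemma radical_extendedIdeal (hJ₀ : J₀.radical = RingHom.ker constantCoeff) :
    (extendedIdeal d J₀).radical = RingHom.ker (projNew K m d) := by
  refine le_antisymm ?_ (ker_projNew_le_radical_extendedIdeal fun i => ?_)
  · rw [(RingHom.ker_isPrime _).isRadical.radical_le_iff, extendedIdeal, Ideal.map_le_iff_le_comap]
    intro p hp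
    have h_coeff : constantCoeff p = 0 := hJ₀.le (Ideal.le_radical hp)
    exact (projNew_rename_castAdd p).trans (by rw [h_coeff, C_0])
  · rw [hJ₀, RingHom.mem_ker, constantCoeff_X]

lemma ringKrullDim_quotient_extendedIdeal (hJ₀ : J₀.radical = RingHom.ker constantCoeff) :
    ringKrullDim (MvPolynomial (Fin (m + d)) K ⧸ extendedIdeal d J₀) = d := by
  rw [ringKrullDim_quotient, ← PrimeSpectrum.zeroLocus_radical, radical_extendedIdeal hJ₀,
    ← ringKrullDim_quotient,
    ringKrullDim_eq_of_ringEquiv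
      (Ideal.quotientKerAlgEquivOfSurjective projNew_surjective).toRingEquiv,
    MvPolynomial.ringKrullDim_of_isNoetherianRing, ringKrullDim_eq_zero_of_field]
  simp

/-- The substitution `y ↦ z + a y` on the column `y` of new variables; it fixes the old ones. -/
noncomputable def affineSubst (z : Fin d → MvPolynomial (Fin m) K) (a : Matrix (Fin d) (Fin d) K) :
    MvPolynomial (Fin (m + d)) K →ₐ[K] MvPolynomial (Fin (m + d)) K :=
  aeval <| Fin.append (X ∘ Fin.castAdd d)
    (rename (Fin.castAdd d) ∘ z + (a.map C).mulVec (X ∘ Fin.natAdd m))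

section AffineSubst

variable (z z' : Fin d → MvPolynomial (Fin m) K) (a a' : Matrix (Fin d) (Fin d) K)

lemma affineSubst_comp_rename_castAdd :
    (affineSubst z a).comp (rename (Fin.castAdd d)) = rename (Fin.castAdd d) := by
  ext i : 1
  simp [affineSubst]

lemma affineSubst_comp_X_natAdd :
    affineSubst z a ∘ X ∘ Fin.natAdd m =
      rename (Fin.castAdd d) ∘ z + (a.map C).mulVec (X ∘ Fin.natAdd m) := by
  ext j : 1
  simp [affineSubst]

lemma map_comp_mulVec_map_C {σ τ : Type*} (f : MvPolynomial σ K →ₐ[K] MvPolynomial τ K)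
    (v : Fin d → MvPolynomial σ K) :
    f ∘ (a.map C).mulVec v = (a.map C).mulVec (f ∘ v) := by
  ext j : 1
  simp only [Matrix.mulVec, dotProduct, Function.comp_apply, map_sum, map_mul, Matrix.map_apply,
    algHom_C, algebraMap_eq]

lemma affineSubst_comp_affineSubst :
    (affineSubst z a).comp (affineSubst z' a') =
      affineSubst (z' + (a'.map C).mulVec z) (a' * a) := by
  have h_old : affineSubst z a ∘ rename (Fin.castAdd d) ∘ z' = rename (Fin.castAdd d) ∘ z' := by
    ext j : 1
    exact DFunLike.congr_fun (affineSubst_comp_rename_castAdd z a) (z' j)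
  have h_rename : rename (Fin.castAdd d) ∘ (a'.map C).mulVec z =
      (a'.map C).mulVec (rename (Fin.castAdd d) ∘ z) := map_comp_mulVec_map_C a' _ z
  have h_new := calc
    affineSubst z a ∘ affineSubst z' a' ∘ X ∘ Fin.natAdd m
      = affineSubst z a ∘ rename (Fin.castAdd d) ∘ z' +
          affineSubst z a ∘ (a'.map C).mulVec (X ∘ Fin.natAdd m) := by
        rw [affineSubst_comp_X_natAdd]
        exact funext fun _ => map_add _ _ _
    _ = rename (Fin.castAdd d) ∘ z' + (a'.map C).mulVec
          (rename (Fin.castAdd d) ∘ z + (a.map C).mulVec (X ∘ Fin.natAdd m)) := by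
        rw [h_old, map_comp_mulVec_map_C, affineSubst_comp_X_natAdd]
    _ = rename (Fin.castAdd d) ∘ z' + rename (Fin.castAdd d) ∘ (a'.map C).mulVec z +
          ((a' * a).map C).mulVec (X ∘ Fin.natAdd m) := by
        rw [Matrix.mulVec_add, Matrix.mulVec_mulVec, ← Matrix.map_mul, h_rename, add_assoc]
    _ = affineSubst (z' + (a'.map C).mulVec z) (a' * a) ∘ X ∘ Fin.natAdd m := by
        rw [affineSubst_comp_X_natAdd]
        exact congr_arg (· + _) (funext fun _ => (map_add _ _ _).symm)
  ext i
  refine Fin.addCases (fun i => ?_) (fun j => ?_) i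
  · simp [affineSubst]
  · exact congr_arg _ (congr_fun h_new j)

lemma affineSubst_zero_one :
    affineSubst (0 : Fin d → MvPolynomial (Fin m) K) 1 = AlgHom.id K _ := by
  ext i : 1
  refine Fin.addCases (fun i => ?_) (fun j => ?_) i <;>
    simp [affineSubst, Matrix.map_one _ (C_0 (R := K)) C_1]

lemma exists_algEquiv_eq_affineSubst (ha : IsUnit a.det) :
    ∃ φ : MvPolynomial (Fin (m + d)) K ≃ₐ[K] MvPolynomial (Fin (m + d)) K,
      (φ : MvPolynomial (Fin (m + d)) K →ₐ[K] _) = affineSubst z a := by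
  refine ⟨AlgEquiv.ofAlgHom (affineSubst z a) (affineSubst (-(a⁻¹.map C).mulVec z) a⁻¹) ?_ ?_, rfl⟩
  · rw [affineSubst_comp_affineSubst, neg_add_cancel, Matrix.nonsing_inv_mul _ ha,
      affineSubst_zero_one]
  · rw [affineSubst_comp_affineSubst, Matrix.mulVec_neg, Matrix.mulVec_mulVec, ← Matrix.map_mul,
      Matrix.mul_nonsing_inv _ ha, Matrix.map_one _ C_0 C_1, Matrix.one_mulVec, add_neg_cancel,
      affineSubst_zero_one]

end AffineSubst

lemma exists_eq_rename_add_sum_of_mem_homogeneousSubmodule_one {p : MvPolynomial (Fin (m + d)) K}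
    (hp : p ∈ homogeneousSubmodule (Fin (m + d)) K 1) :
    ∃ (z : MvPolynomial (Fin m) K) (a : Fin d → K), constantCoeff z = 0 ∧
      p = rename (Fin.castAdd d) z + ∑ k, C (a k) * X (Fin.natAdd m k) := by
  rw [homogeneousSubmodule_one_eq_span_X, Submodule.mem_span_range_iff_exists_fun] at hp
  obtain ⟨c, rfl⟩ := hp
  refine ⟨∑ i, C (c (Fin.castAdd d i)) * X i, fun k => c (Fin.natAdd m k), by simp, ?_⟩
  simp [Fin.sum_univ_add, smul_eq_C_mul]

lemma isUnit_det_of_finite_quotient {B : Type*} [CommRing B] [Algebra K B]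
    {f : B →ₐ[K] MvPolynomial (Fin d) K} (hf : Function.Surjective f) {θ : Fin d → B}
    {a : Matrix (Fin d) (Fin d) K} (hθ : ∀ j, f (θ j) = ∑ k, C (a j k) * X k)
    [Module.Finite K (B ⧸ Ideal.span (Set.range θ))] : IsUnit a.det := by
  by_contra h_det
  obtain ⟨c, hc, hac⟩ := Matrix.exists_mulVec_eq_zero_iff.2 (isUnit_iff_ne_zero.not_left.1 h_det)
  obtain ⟨k, hk⟩ := Function.ne_iff.1 hc
  -- Restrict polynomial functions to the line `K c`, on which all forms `f (θ j)` vanish.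
  let line : MvPolynomial (Fin d) K →ₐ[K] Polynomial K :=
    aeval fun k => Polynomial.C (c k) * Polynomial.X
  have h_line : Function.Surjective line := by
    intro p
    have h_section : line.comp (Polynomial.aeval (C (c k)⁻¹ * X k)) = AlgHom.id K _ := by
      ext : 1
      simp [line, ← mul_assoc, ← Polynomial.C_mul, inv_mul_cancel₀ hk]
    exact ⟨_, DFunLike.congr_fun h_section p⟩
  have h_ker : Ideal.span (Set.range θ) ≤ RingHom.ker (line.comp f) := by
    rw [Ideal.span_le, Set.range_subset_iff]
    intro j
    have hac_j : ∑ i, a j i * c i = 0 := congr_fun hac j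
    have h_form : line (∑ i, C (a j i) * X i) =
        Polynomial.C (∑ i, a j i * c i) * Polynomial.X := by
      simp [line, Finset.sum_mul, mul_assoc]
    rw [SetLike.mem_coe, RingHom.mem_ker, AlgHom.comp_apply, hθ j, h_form, hac_j, Polynomial.C_0,
      zero_mul]
  have : Module.Finite K (Polynomial K) :=
    Module.Finite.of_surjective (Ideal.Quotient.liftₐ _ (line.comp f) h_ker).toLinearMap
      (Ideal.Quotient.lift_surjective_of_surjective _ h_ker (h_line.comp hf))
  exact Polynomial.not_finite this

lemma extendedIdeal_span_monomial (d : ℕ) (s : Set (Fin m →₀ ℕ)) :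
    extendedIdeal d (Ideal.span ((fun v => monomial v (1 : K)) '' s)) =
      Ideal.span ((fun v => monomial v (1 : K)) '' (Finsupp.mapDomain (Fin.castAdd d) '' s)) := by
  rw [extendedIdeal, Ideal.map_span, Set.image_image, Set.image_image]
  simp only [rename_monomial]

lemma natAdd_notMem_range_castAdd (j : Fin d) :
    Fin.natAdd m j ∉ Set.range (Fin.castAdd d : Fin m → Fin (m + d)) := by
  rintro ⟨i, hi⟩
  have h_lt := i.isLt
  have h_val : (i : ℕ) = m + j := congr_arg Fin.val hi
  omega

lemma mapDomain_castAdd_natAdd (v : Fin m →₀ ℕ) (j : Fin d) :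
    Finsupp.mapDomain (Fin.castAdd d) v (Fin.natAdd m j) = 0 :=
  Finsupp.mapDomain_of_notMem_range _ _ (natAdd_notMem_range_castAdd j)

lemma isWeaklyRegular_X_natAdd (s : Set (Fin m →₀ ℕ)) :
    IsWeaklyRegular (MvPolynomial (Fin (m + d)) K ⧸
        extendedIdeal d (Ideal.span ((fun v => monomial v (1 : K)) '' s)))
      ((List.ofFn (Fin.natAdd m : Fin d → Fin (m + d))).map X :
        List (MvPolynomial (Fin (m + d)) K)) := by
  rw [extendedIdeal_span_monomial]
  refine isWeaklyRegular_map_X_quotient_span_monomial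
    (List.nodup_ofFn.2 (Fin.natAdd_injective _ _)) ?_
  rw [List.forall_mem_ofFn_iff]
  rintro j _ ⟨v, -, rfl⟩
  exact mapDomain_castAdd_natAdd v j

lemma isWeaklyRegular_map_of_map_eq {A B : Type*} [CommRing A] [CommRing B] {I : Ideal A}
    {J : Ideal B} (φ : A ≃+* B) (h_map : J = I.map (φ : A →+* B)) {rs : List A}
    (h_reg : IsWeaklyRegular (A ⧸ I) rs) : IsWeaklyRegular (B ⧸ J) (rs.map φ) := by
  refine ((Ideal.quotientEquiv I J φ h_map).toAddEquiv.isWeaklyRegular_congr ?_).1 h_reg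
  rw [List.forall₂_map_right_iff, List.forall₂_same]
  exact fun r _ x => map_mul (Ideal.quotientEquiv I J φ h_map) (Ideal.Quotient.mk I r) x

lemma map_affineSubst_extendedIdeal (z : Fin d → MvPolynomial (Fin m) K)
    (a : Matrix (Fin d) (Fin d) K) :
    (extendedIdeal d J₀).map (affineSubst z a) = extendedIdeal d J₀ := by
  rw [extendedIdeal, Ideal.map_mapₐ, affineSubst_comp_rename_castAdd]

lemma isWeaklyRegular_map_affineSubst {a : Matrix (Fin d) (Fin d) K} (ha : IsUnit a.det)
    (z : Fin d → MvPolynomial (Fin m) K) {rs : List (MvPolynomial (Fin (m + d)) K)}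
    (h_reg : IsWeaklyRegular (MvPolynomial (Fin (m + d)) K ⧸ extendedIdeal d J₀) rs) :
    IsWeaklyRegular (MvPolynomial (Fin (m + d)) K ⧸ extendedIdeal d J₀)
      (rs.map (affineSubst z a)) := by
  obtain ⟨φ, hφ⟩ := exists_algEquiv_eq_affineSubst z a ha
  have h_map := map_affineSubst_extendedIdeal (J₀ := J₀) z a
  rw [← hφ] at h_map ⊢
  exact isWeaklyRegular_map_of_map_eq φ.toRingEquiv h_map.symm h_reg

theorem isRegular_quotient_extendedIdeal_of_finite {s : Set (Fin m →₀ ℕ)}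
    (hJ₀ : J₀ = Ideal.span ((fun v => monomial v (1 : K)) '' s))
    (h_rad : J₀.radical = RingHom.ker constantCoeff)
    {θ : Fin d → MvPolynomial (Fin (m + d)) K ⧸ extendedIdeal d J₀}
    (hθ : ∀ j, θ j ∈ quotientGrading (homogeneousSubmodule (Fin (m + d)) K) (extendedIdeal d J₀) 1)
    [Module.Finite K
      ((MvPolynomial (Fin (m + d)) K ⧸ extendedIdeal d J₀) ⧸ Ideal.span (Set.range θ))] :
    IsRegular (MvPolynomial (Fin (m + d)) K ⧸ extendedIdeal d J₀) (List.ofFn θ) := by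
  choose p hp hpθ using hθ
  choose z a hz hpz using fun j => exists_eq_rename_add_sum_of_mem_homogeneousSubmodule_one (hp j)
  have h_le : extendedIdeal d J₀ ≤ RingHom.ker (projNew K m d) :=
    (radical_extendedIdeal h_rad) ▸ Ideal.le_radical
  let f := Ideal.Quotient.liftₐ (extendedIdeal d J₀) (projNew K m d) h_le
  have hf : Function.Surjective f :=
    Ideal.Quotient.lift_surjective_of_surjective _ h_le projNew_surjective
  have hfθ (j) : f (θ j) = ∑ k, C (a j k) * X k := by
    have h_proj : f (θ j) = projNew K m d (p j) := by
      rw [← hpθ j]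
      rfl
    rw [h_proj, hpz j, map_add, projNew_rename_castAdd, hz, C_0, zero_add, map_sum]
    simp [projNew_X_natAdd, algHom_C]
  have h_subst : List.ofFn θ = (((List.ofFn (Fin.natAdd m : Fin d → Fin (m + d))).map X).map
      (affineSubst z (.of a))).map
        (algebraMap _ (MvPolynomial (Fin (m + d)) K ⧸ extendedIdeal d J₀)) := by
    simp only [List.map_ofFn]
    congr 1
    ext j : 1
    rw [← hpθ j, hpz j]
    simp [affineSubst, Matrix.mulVec, dotProduct]
  refine ⟨?_, ?_⟩
  · rw [h_subst, isWeaklyRegular_map_algebraMap_iff]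
    exact isWeaklyRegular_map_affineSubst (isUnit_det_of_finite_quotient hf hfθ) z
      (hJ₀ ▸ isWeaklyRegular_X_natAdd s)
  · have h_ker : Ideal.ofList (List.ofFn θ) ≤ RingHom.ker ((aeval (0 : Fin d → K)).comp f) := by
      rw [ofList_ofFn, Ideal.span_le]
      rintro _ ⟨j, rfl⟩
      simp [RingHom.mem_ker, hfθ]
    rw [smul_eq_mul, Ideal.mul_top]
    exact (h_ker.trans_lt (RingHom.ker_ne_top _).lt_top).ne'

/-- The restriction of an exponent vector to the old variables. -/
noncomputable def oldExponents (m d : ℕ) : (Fin (m + d) →₀ ℕ) →+ (Fin m →₀ ℕ) :=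
  Finsupp.comapDomain.addMonoidHom (Fin.castAdd_injective m d)

@[simp]
lemma oldExponents_apply (u : Fin (m + d) →₀ ℕ) (i : Fin m) :
    oldExponents m d u i = u (Fin.castAdd d i) :=
  rfl

lemma oldExponents_single_castAdd (i : Fin m) (k : ℕ) :
    oldExponents m d (Finsupp.single (Fin.castAdd d i) k) = Finsupp.single i k :=
  Finsupp.comapDomain_single _ _ _ _

lemma oldExponents_single_natAdd (j : Fin d) (k : ℕ) :
    oldExponents m d (Finsupp.single (Fin.natAdd m j) k) = 0 :=
  Finsupp.comapDomain_single_of_not_mem_range (natAdd_notMem_range_castAdd j) _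
    (Fin.castAdd_injective m d).injOn

lemma oldExponents_mapDomain (v : Fin m →₀ ℕ) :
    oldExponents m d (v.mapDomain (Fin.castAdd d)) = v :=
  Finsupp.comapDomain_mapDomain _ (Fin.castAdd_injective m d) v

lemma mapDomain_oldExponents {u : Fin (m + d) →₀ ℕ} (hu : ∀ j, u (Fin.natAdd m j) = 0) :
    (oldExponents m d u).mapDomain (Fin.castAdd d) = u := by
  ext i
  refine Fin.addCases (fun i => ?_) (fun j => ?_) i
  · rw [Finsupp.mapDomain_apply (Fin.castAdd_injective m d), oldExponents_apply]
  · rw [mapDomain_castAdd_natAdd, hu]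

lemma mapDomain_castAdd_le_iff {u : Fin (m + d) →₀ ℕ} {v : Fin m →₀ ℕ} :
    v.mapDomain (Fin.castAdd d) ≤ u ↔ v ≤ oldExponents m d u := by
  refine ⟨fun h i => ?_, fun h i => ?_⟩
  · simpa [Finsupp.mapDomain_apply (Fin.castAdd_injective m d)] using h (Fin.castAdd d i)
  · refine Fin.addCases (fun i => ?_) (fun j => ?_) i
    · simpa [Finsupp.mapDomain_apply (Fin.castAdd_injective m d)] using h i
    · simp [mapDomain_castAdd_natAdd]

variable {s : Set (Fin m →₀ ℕ)}

lemma isLowerSet_preimage_oldExponents (hs : IsLowerSet s) :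
    IsLowerSet (oldExponents m d ⁻¹' s) :=
  fun _ _ h_le hu => hs (fun i => h_le (Fin.castAdd d i)) hu

lemma isCostable_preimage_oldExponents (h_lower : IsLowerSet s) (hs : IsCostable s) :
    IsCostable (oldExponents m d ⁻¹' s) := by
  intro u i j hij hu
  induction j using Fin.addCases with
  | left j =>
    induction i using Fin.addCases with
    | left i =>
      rw [Set.mem_preimage, map_add, oldExponents_single_castAdd] at hu ⊢
      exact hs _ i j hij hu
    | right i => exact absurd hij (by rw [Fin.lt_def, Fin.val_natAdd, Fin.val_castAdd]; omega)
  | right j =>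
    rw [Set.mem_preimage, map_add, oldExponents_single_natAdd, add_zero]
    exact isLowerSet_preimage_oldExponents h_lower le_self_add hu

lemma extendedIdeal_complIdeal :
    extendedIdeal d (complIdeal K s) = complIdeal K (oldExponents m d ⁻¹' s) := by
  rw [complIdeal, extendedIdeal_span_monomial]
  apply le_antisymm
  · refine Ideal.span_mono (Set.image_mono ?_)
    rintro _ ⟨v, hv, rfl⟩
    rwa [Set.mem_compl_iff, Set.mem_preimage, oldExponents_mapDomain]
  · rw [complIdeal, Ideal.span_le]
    rintro _ ⟨u, hu, rfl⟩
    exact monomial_mem_span_monomial_iff.2 ⟨_, ⟨_, hu, rfl⟩, mapDomain_castAdd_le_iff.2 le_rfl⟩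

lemma setOf_degree_eq_and_forall_not_le (hs : IsLowerSet s) (k : ℕ) :
    {u : Fin (m + d) →₀ ℕ | u.degree = k ∧
      ∀ v ∈ Finsupp.mapDomain (Fin.castAdd d) '' sᶜ ∪
        (fun j => Finsupp.single j 1) '' {j | j ∈ List.ofFn (Fin.natAdd m : Fin d → Fin (m + d))},
          ¬ v ≤ u} =
      Finsupp.mapDomain (Fin.castAdd d) '' {v ∈ s | v.degree = k} := by
  ext u
  constructor
  · rintro ⟨rfl, hu⟩
    have h_new (j : Fin d) : u (Fin.natAdd m j) = 0 := by
      by_contra h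
      exact hu _ (Or.inr ⟨_, List.mem_ofFn.2 ⟨j, rfl⟩, rfl⟩)
        (Finsupp.single_le_iff.2 (Nat.one_le_iff_ne_zero.2 h))
    refine ⟨oldExponents m d u, ⟨?_, ?_⟩, mapDomain_oldExponents h_new⟩
    · by_contra h
      exact hu _ (Or.inl ⟨_, h, rfl⟩) (mapDomain_castAdd_le_iff.2 le_rfl)
    · rw [← Finsupp.degree_mapDomain (Fin.castAdd d), mapDomain_oldExponents h_new]
  · rintro ⟨v, ⟨hv, rfl⟩, rfl⟩
    refine ⟨Finsupp.degree_mapDomain _ v, ?_⟩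
    rintro _ (⟨w, hw, rfl⟩ | ⟨_, hj, rfl⟩) h_le
    · rw [mapDomain_castAdd_le_iff, oldExponents_mapDomain] at h_le
      exact hw (hs h_le hv)
    · obtain ⟨j, rfl⟩ := List.mem_ofFn.1 hj
      rw [Finsupp.single_le_iff, mapDomain_castAdd_natAdd] at h_le
      omega

attribute [local instance] MvPolynomial.gradedAlgebra

lemma isHomogeneous_extendedIdeal_span_monomial :
    (extendedIdeal d (Ideal.span ((fun v => monomial v (1 : K)) '' s))).IsHomogeneous
      (homogeneousSubmodule (Fin (m + d)) K) := by
  rw [extendedIdeal_span_monomial]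
  refine Ideal.homogeneous_span (homogeneousSubmodule (Fin (m + d)) K) _ ?_
  rintro _ ⟨u, -, rfl⟩
  exact ⟨u.degree, isHomogeneous_monomial _ rfl⟩

lemma hilbertSeries_extendedIdeal_complIdeal (hs : IsLowerSet s) :
    (1 - PowerSeries.X) ^ d *
        hilbertSeries (homogeneousSubmodule (Fin (m + d)) K) (extendedIdeal d (complIdeal K s)) =
      PowerSeries.mk fun k => ({v ∈ s | v.degree = k}.ncard : ℤ) := by
  have (k : ℕ) : Module.Finite K (homogeneousSubmodule (Fin (m + d)) K k) :=
    Module.Finite.iff_fg.2 (homogeneousSubmodule_fg _ _ k)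
  have h_series := hilbertSeries_sup_ofList (𝒜 := homogeneousSubmodule (Fin (m + d)) K)
    (I := extendedIdeal d (Ideal.span ((fun v => monomial v (1 : K)) '' sᶜ)))
    isHomogeneous_extendedIdeal_span_monomial
    (List.forall_mem_map.2 fun j _ => isHomogeneous_X K j)
    (isWeaklyRegular_X_natAdd (K := K) (d := d) sᶜ)
  rw [List.length_map, List.length_ofFn] at h_series
  rw [complIdeal, ← h_series, extendedIdeal_span_monomial, span_monomial_sup_ofList_map_X]
  ext k
  rw [coeff_hilbertSeries, PowerSeries.coeff_mk, finrank_quotientGrading_span_monomial,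
    setOf_degree_eq_and_forall_not_le hs,
    Set.ncard_image_of_injective _ (Finsupp.mapDomain_injective (Fin.castAdd_injective m d))]

end ExtendedIdeal

/-! ### Linear Noether normalization -/

section LinearNormalization

variable {K A : Type*} [Field K] [CommRing A] [Algebra K A] {V : Submodule K A}

lemma exists_mem_forall_notMem_of_not_le [Infinite K] {s : Set (Ideal A)} (hs : s.Finite)
    (hV : ∀ P ∈ s, ¬ V ≤ P.restrictScalars K) : ∃ θ ∈ V, ∀ P ∈ s, θ ∉ P := by
  classical
  let W : Finset (Submodule K V) :=
    hs.toFinset.image fun P => (P.restrictScalars K).comap V.subtype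
  have hW : ⊤ ∉ W := by
    intro h_top
    obtain ⟨P, hP, h_comap⟩ := Finset.mem_image.1 h_top
    exact hV P (hs.mem_toFinset.1 hP) (Submodule.comap_subtype_eq_top.1 h_comap)
  obtain ⟨θ, hθ⟩ :=
    (Set.ne_univ_iff_exists_notMem _).1 (Subspace.biUnion_ne_univ_of_top_notMem hW)
  refine ⟨θ, θ.2, fun P hP hθP => hθ ?_⟩
  exact Set.mem_biUnion (Finset.mem_image_of_mem _ (hs.mem_toFinset.2 hP)) hθP

lemma isMaximal_of_le_of_adjoin_eq_top (hV : Algebra.adjoin K (V : Set A) = ⊤) {P : Ideal A}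
    [hP : P.IsPrime] (h_le : V ≤ P.restrictScalars K) : P.IsMaximal := by
  have h_range : (Ideal.Quotient.mkₐ K P).range = ⊥ := by
    rw [← Algebra.map_top, ← hV, AlgHom.map_adjoin, eq_bot_iff, Algebra.adjoin_le_iff]
    rintro _ ⟨x, hx, rfl⟩
    rw [Ideal.Quotient.mkₐ_eq_mk, Ideal.Quotient.eq_zero_iff_mem.2 (h_le hx)]
    exact zero_mem _
  have h_surj : Function.Surjective (algebraMap K (A ⧸ P)) := by
    intro y
    change y ∈ Set.range (algebraMap K (A ⧸ P))
    rw [← Algebra.mem_bot, ← h_range]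
    exact Ideal.Quotient.mkₐ_surjective K P y
  refine Ideal.Quotient.maximal_of_isField P ?_
  exact (RingEquiv.ofBijective _ ⟨(algebraMap K (A ⧸ P)).injective, h_surj⟩).symm.toMulEquiv.isField
    (Field.toIsField K)

lemma exists_mem_coheight_le [Infinite K] [IsNoetherianRing A]
    (hV : Algebra.adjoin K (V : Set A) = ⊤) {I : Ideal A} {r : ℕ}
    (hI : ∀ p : PrimeSpectrum A, I ≤ p.asIdeal → Order.coheight p ≤ r + 1) :
    ∃ θ ∈ V, ∀ p : PrimeSpectrum A, I ⊔ Ideal.span {θ} ≤ p.asIdeal → Order.coheight p ≤ r := by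
  obtain ⟨θ, hθV, hθ⟩ := exists_mem_forall_notMem_of_not_le
    (s := {P ∈ I.minimalPrimes | ¬ V ≤ P.restrictScalars K})
    ((Ideal.finite_minimalPrimes_of_isNoetherianRing A I).subset fun P hP => hP.1)
    fun P hP => hP.2
  refine ⟨θ, hθV, fun p hp => ?_⟩
  obtain ⟨P, hP, hPp⟩ := Ideal.exists_minimalPrimes_le (le_sup_left.trans hp)
  let P' : PrimeSpectrum A := ⟨P, hP.1.1⟩
  by_cases hVP : V ≤ P.restrictScalars K
  · have := hP.1.1
    have h_max : IsMax p :=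
      (PrimeSpectrum.isMax_iff.2 (isMaximal_of_le_of_adjoin_eq_top hV hVP) : IsMax P').mono hPp
    rw [Order.coheight_eq_zero.2 h_max]
    exact zero_le
  · have h_lt : P' < p := by
      refine lt_of_le_of_ne hPp fun h_eq => hθ P ⟨hP, hVP⟩ ?_
      rw [show P = p.asIdeal from congrArg PrimeSpectrum.asIdeal h_eq]
      exact hp (Ideal.mem_sup_right (Ideal.mem_span_singleton_self θ))
    exact (ENat.add_le_add_iff_right ENat.one_ne_top).1
      ((Order.coheight_add_one_le h_lt).trans (hI P' hP.1.2))

lemma finite_quotient_of_coheight_le_zero [Algebra.FiniteType K A] {I : Ideal A}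
    (hI : ∀ p : PrimeSpectrum A, I ≤ p.asIdeal → Order.coheight p ≤ 0) :
    Module.Finite K (A ⧸ I) := by
  rw [Module.finite_iff_krullDimLE_zero, Ring.krullDimLE_zero_iff]
  intro P hP
  have h_le : I ≤ P.comap (Ideal.Quotient.mk I) := by
    rw [← Ideal.map_le_iff_le_comap, Ideal.map_quotient_self]
    exact bot_le
  have h_max : (P.comap (Ideal.Quotient.mk I)).IsMaximal :=
    PrimeSpectrum.isMax_iff.1 <| Order.coheight_eq_zero.1 <|
      nonpos_iff_eq_zero.1 (hI ⟨_, hP.comap _⟩ h_le)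
  have h_map := Ideal.map_eq_top_or_isMaximal_of_surjective (Ideal.Quotient.mk I)
    Ideal.Quotient.mk_surjective h_max
  rw [Ideal.map_comap_of_surjective _ Ideal.Quotient.mk_surjective] at h_map
  exact h_map.resolve_left hP.ne_top

lemma exists_fin_finite_quotient_sup [Infinite K] [Algebra.FiniteType K A]
    (hV : Algebra.adjoin K (V : Set A) = ⊤) {I : Ideal A} {r : ℕ}
    (hI : ∀ p : PrimeSpectrum A, I ≤ p.asIdeal → Order.coheight p ≤ r) :
    ∃ θ : Fin r → A, (∀ j, θ j ∈ V) ∧ Module.Finite K (A ⧸ (I ⊔ Ideal.span (Set.range θ))) := by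
  induction r generalizing I with
  | zero =>
    refine ⟨Fin.elim0, fun j => j.elim0, ?_⟩
    rw [Set.range_eq_empty, Ideal.span_empty, sup_bot_eq]
    exact finite_quotient_of_coheight_le_zero hI
  | succ r ih =>
    have := Algebra.FiniteType.isNoetherianRing K A
    obtain ⟨θ₀, hθ₀, h_coheight⟩ := exists_mem_coheight_le hV hI
    obtain ⟨θ, hθ, h_finite⟩ := ih h_coheight
    refine ⟨Fin.cons θ₀ θ, Fin.cases hθ₀ hθ, ?_⟩
    rwa [Fin.range_cons, Ideal.span_insert, ← sup_assoc]

theorem exists_fin_finite_quotient_of_ringKrullDim_eq [Infinite K] [Algebra.FiniteType K A]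
    (hV : Algebra.adjoin K (V : Set A) = ⊤) {d : ℕ} (hd : ringKrullDim A = d) :
    ∃ θ : Fin d → A, (∀ j, θ j ∈ V) ∧ Module.Finite K (A ⧸ Ideal.span (Set.range θ)) := by
  have h_coheight (p : PrimeSpectrum A) (_ : ⊥ ≤ p.asIdeal) : Order.coheight p ≤ d := by
    have h_le := Order.coheight_le_krullDim p
    rw [show Order.krullDim (PrimeSpectrum A) = d from hd] at h_le
    exact_mod_cast h_le
  obtain ⟨θ, hθ, h_finite⟩ := exists_fin_finite_quotient_sup hV h_coheight
  exact ⟨θ, hθ, by rwa [bot_sup_eq] at h_finite⟩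

end LinearNormalization

section StandardGraded

variable {K A : Type*} [Field K] [CommRing A] [Algebra K A] {𝒜 : ℕ → Submodule K A}

lemma adjoin_eq_top_of_eq_pow [GradedAlgebra 𝒜] (h𝒜 : ∀ k, 𝒜 k = 𝒜 1 ^ k) :
    Algebra.adjoin K (𝒜 1 : Set A) = ⊤ := by
  rw [← Algebra.toSubmodule_eq_top, eq_top_iff,
    ← (DirectSum.Decomposition.isInternal 𝒜).submodule_iSup_eq_top]
  refine iSup_le fun k => ?_
  rw [h𝒜 k]
  induction k with
  | zero =>
    rw [pow_zero, Submodule.one_le]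
    exact Subalgebra.one_mem _
  | succ k ih =>
    rw [pow_succ, Submodule.mul_le]
    exact fun x hx y hy => Subalgebra.mul_mem _ (ih hx) (Algebra.subset_adjoin hy)

lemma finiteType_of_adjoin_eq_top {V : Submodule K A} [FiniteDimensional K V]
    (hV : Algebra.adjoin K (V : Set A) = ⊤) : Algebra.FiniteType K A := by
  obtain ⟨s, hs⟩ := Module.Finite.iff_fg.1 (inferInstance : FiniteDimensional K V)
  refine ⟨s, ?_⟩
  rw [← Algebra.adjoin_span, hs, hV]

end StandardGraded

/-! ### Stable ideals with prescribed Hilbert function -/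

section Main

open RingTheory.Sequence
open scoped Finset

variable {K A : Type*} [Field K] [CommRing A] [Algebra K A] {𝒜 : ℕ → Submodule K A}
  [GradedAlgebra 𝒜]

lemma hilbertSeries_ofList [∀ k, FiniteDimensional K (𝒜 k)] {rs : List A}
    (hrs : ∀ r ∈ rs, r ∈ 𝒜 1) (h_reg : IsWeaklyRegular A rs) :
    hilbertSeries 𝒜 (Ideal.ofList rs) =
      (1 - PowerSeries.X) ^ rs.length *
        PowerSeries.mk fun k => (Module.finrank K (𝒜 k) : ℤ) := by
  have h_bot : IsWeaklyRegular (A ⧸ (⊥ : Ideal A)) rs :=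
    ((Submodule.quotEquivOfEqBot ⊥ rfl).isWeaklyRegular_congr rs).2 h_reg
  rw [← bot_sup_eq (Ideal.ofList rs), ← hilbertSeries_bot,
    hilbertSeries_sup_ofList (Ideal.IsHomogeneous.bot 𝒜) hrs h_bot]

lemma finrank_quotientGrading_one_add_length [Nontrivial A] [∀ k, FiniteDimensional K (𝒜 k)]
    (h𝒜 : 𝒜 0 = 1) {rs : List A} (hrs : ∀ r ∈ rs, r ∈ 𝒜 1) (h_reg : IsWeaklyRegular A rs) :
    Module.finrank K (quotientGrading 𝒜 (Ideal.ofList rs) 1) + rs.length =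
      Module.finrank K (𝒜 1) := by
  have h_coeff := congrArg (PowerSeries.coeff 1) (hilbertSeries_ofList hrs h_reg)
  rw [coeff_hilbertSeries, PowerSeries.coeff_one_mul, PowerSeries.coeff_one_pow,
    ← PowerSeries.coeff_zero_eq_constantCoeff_apply (PowerSeries.mk _), PowerSeries.coeff_mk,
    PowerSeries.coeff_mk, h𝒜, finrank_one_eq_one] at h_coeff
  simp only [map_sub, map_pow, map_one, PowerSeries.coeff_one, PowerSeries.coeff_one_X,
    PowerSeries.constantCoeff_X, one_ne_zero, if_false, sub_zero, zero_sub, one_pow, mul_one,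
    mul_neg, Nat.cast_one] at h_coeff
  omega

lemma exists_orderIdeal_card_eq_finrank_quotientGrading (h𝒜 : ∀ k, 𝒜 k = 𝒜 1 ^ k)
    [FiniteDimensional K (𝒜 1)] {I : Ideal A} (hI : I.IsHomogeneous 𝒜) (h_top : I ≠ ⊤)
    [FiniteDimensional K (A ⧸ I)] {m : ℕ} (hm : Module.finrank K (quotientGrading 𝒜 I 1) ≤ m) :
    ∃ G : Finset (Fin m →₀ ℕ), IsLowerSet (G : Set (Fin m →₀ ℕ)) ∧
      IsCostable (G : Set (Fin m →₀ ℕ)) ∧ 0 ∈ G ∧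
        ∀ k, #{u ∈ G | u.degree = k} = Module.finrank K (quotientGrading 𝒜 I k) := by
  have h_fin := finite_setOf_quotientGrading_ne_bot hI
  have h_pow := quotientGrading_eq_pow h𝒜 I
  obtain ⟨G, hG_lower, hG, h_count⟩ := exists_isCostable_card_eq_finrank_pow hm
    (by simpa only [← h_pow] using h_fin)
  refine ⟨G, hG_lower, hG, ?_, fun k => by rw [h_count, ← h_pow]⟩
  have := Ideal.Quotient.nontrivial_iff.2 h_top
  have h_pos : 0 < #{u ∈ G | u.degree = 0} := by
    rw [h_count, pow_zero, finrank_one_eq_one]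
    exact one_pos
  obtain ⟨u, hu⟩ := Finset.card_pos.1 h_pos
  rw [Finset.mem_filter, Finsupp.degree_eq_zero_iff] at hu
  exact hu.2 ▸ hu.1

lemma exists_orderIdeal_of_isRegular (h𝒜 : ∀ k, 𝒜 k = 𝒜 1 ^ k) [FiniteDimensional K (𝒜 1)]
    {rs : List A} (hrs : ∀ r ∈ rs, r ∈ 𝒜 1) (h_reg : IsRegular A rs)
    [FiniteDimensional K (A ⧸ Ideal.ofList rs)] {n : ℕ} (hn : Module.finrank K (𝒜 1) ≤ n) :
    ∃ m, n = m + rs.length ∧ ∃ G : Finset (Fin m →₀ ℕ), IsLowerSet (G : Set (Fin m →₀ ℕ)) ∧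
      IsCostable (G : Set (Fin m →₀ ℕ)) ∧ 0 ∈ G ∧
        (1 - PowerSeries.X) ^ rs.length *
            PowerSeries.mk (fun k => (Module.finrank K (𝒜 k) : ℤ)) =
          PowerSeries.mk fun k => (#{u ∈ G | u.degree = k} : ℤ) := by
  have (k : ℕ) : FiniteDimensional K (𝒜 k) := by
    rw [h𝒜 k]
    exact Module.Finite.iff_fg.2 ((Module.Finite.iff_fg.1 ‹_›).pow k)
  have h_top : Ideal.ofList rs ≠ ⊤ := by
    simpa only [smul_eq_mul, Ideal.mul_top] using h_reg.top_ne_smul.symm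
  have : Nontrivial A := Submodule.nontrivial_iff A |>.1 ⟨_, _, h_top⟩
  have h_hom : (Ideal.ofList rs).IsHomogeneous 𝒜 :=
    Ideal.homogeneous_span 𝒜 _ fun r hr => ⟨1, hrs r hr⟩
  have h_one :=
    finrank_quotientGrading_one_add_length ((h𝒜 0).trans (pow_zero _)) hrs h_reg.toIsWeaklyRegular
  obtain ⟨m, rfl⟩ : ∃ m, n = m + rs.length := ⟨n - rs.length, by omega⟩
  obtain ⟨G, hG_lower, hG, hG_zero, h_count⟩ :=
    exists_orderIdeal_card_eq_finrank_quotientGrading h𝒜 h_hom h_top (m := m) (by omega)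
  refine ⟨m, rfl, G, hG_lower, hG, hG_zero, ?_⟩
  simp only [h_count, ← hilbertSeries_ofList hrs h_reg.toIsWeaklyRegular, hilbertSeries]

lemma isRegular_quotient_extendedIdeal_complIdeal {m d : ℕ} {s : Set (Fin m →₀ ℕ)}
    (hs : s.Finite) (h_zero : 0 ∈ s) {e : ℕ}
    (he : ringKrullDim (MvPolynomial (Fin (m + d)) K ⧸ extendedIdeal d (complIdeal K s)) = e)
    {θ : Fin e → MvPolynomial (Fin (m + d)) K ⧸ extendedIdeal d (complIdeal K s)}
    (hθ : ∀ j, θ j ∈ quotientGrading (homogeneousSubmodule (Fin (m + d)) K)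
      (extendedIdeal d (complIdeal K s)) 1)
    [Module.Finite K ((MvPolynomial (Fin (m + d)) K ⧸ extendedIdeal d (complIdeal K s)) ⧸
      Ideal.span (Set.range θ))] :
    IsRegular (MvPolynomial (Fin (m + d)) K ⧸ extendedIdeal d (complIdeal K s))
      (List.ofFn θ) := by
  have h_rad := radical_complIdeal (K := K) hs h_zero
  obtain rfl : d = e := by
    rw [ringKrullDim_quotient_extendedIdeal h_rad] at he
    exact_mod_cast he
  exact isRegular_quotient_extendedIdeal_of_finite (J₀ := complIdeal K s) rfl h_rad hθ

theorem exists_isStableMonomialIdeal_of_isRegular (h𝒜 : ∀ k, 𝒜 k = 𝒜 1 ^ k)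
    [FiniteDimensional K (𝒜 1)] {d : ℕ} {θ : Fin d → A} (hθ : ∀ j, θ j ∈ 𝒜 1)
    (h_reg : IsRegular A (List.ofFn θ)) [Module.Finite K (A ⧸ Ideal.span (Set.range θ))]
    {n : ℕ} (hn : Module.finrank K (𝒜 1) ≤ n) :
    ∃ J : Ideal (MvPolynomial (Fin n) K), IsStableMonomialIdeal J ∧
      (∀ e : ℕ, ringKrullDim (MvPolynomial (Fin n) K ⧸ J) = e →
        ∀ θ' : Fin e → MvPolynomial (Fin n) K ⧸ J,
          (∀ j, θ' j ∈ quotientGrading (homogeneousSubmodule (Fin n) K) J 1) →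
          Module.Finite K ((MvPolynomial (Fin n) K ⧸ J) ⧸ Ideal.span (Set.range θ')) →
          IsRegular (MvPolynomial (Fin n) K ⧸ J) (List.ofFn θ')) ∧
      ∀ i, Module.finrank K (quotientGrading (homogeneousSubmodule (Fin n) K) J i) =
        Module.finrank K (𝒜 i) := by
  have hθ_list : ∀ r ∈ List.ofFn θ, r ∈ 𝒜 1 := by
    simpa only [List.mem_ofFn, forall_exists_index, forall_apply_eq_imp_iff] using hθ
  have : FiniteDimensional K (A ⧸ Ideal.ofList (List.ofFn θ)) := by rwa [ofList_ofFn]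
  obtain ⟨m, h_eq, G, hG_lower, hG, hG_zero, h_series⟩ :=
    exists_orderIdeal_of_isRegular h𝒜 hθ_list h_reg hn
  rw [List.length_ofFn] at h_eq h_series
  subst h_eq
  refine ⟨extendedIdeal d (complIdeal K G), ?_, fun e he θ' hθ' _ => ?_, fun k => ?_⟩
  · rw [extendedIdeal_complIdeal]
    exact isStableMonomialIdeal_complIdeal (isLowerSet_preimage_oldExponents hG_lower)
      (isCostable_preimage_oldExponents hG_lower hG)
  · exact isRegular_quotient_extendedIdeal_complIdeal G.finite_toSet hG_zero he hθ'
  · simp only [← Set.ncard_coe_finset, Finset.coe_filter] at h_series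
    have h_ne : (1 - PowerSeries.X : PowerSeries ℤ) ≠ 0 :=
      right_ne_zero_of_mul_eq_one (PowerSeries.mk_one_mul_one_sub_eq_one ℤ)
    have h_cancel := mul_left_cancel₀ (pow_ne_zero d h_ne)
      ((hilbertSeries_extendedIdeal_complIdeal (K := K) hG_lower).trans h_series.symm)
    simpa using congrArg (PowerSeries.coeff k) h_cancel

end Main

theorem exists_stable_monomial_ideal_same_hilbert_series_general
    (K : Type*) [Field K] [Infinite K] (n : ℕ)
    (A : Type*) [CommRing A] [Algebra K A]
    (𝒜 : ℕ → Submodule K A) [GradedAlgebra 𝒜]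
    (hstd : ∀ i, 𝒜 i = 𝒜 1 ^ i)
    [Module.Finite K (𝒜 1)]
    (d : ℕ) (hdim : ringKrullDim A = d)
    (hCM : ∀ θ' : Fin d → A, (∀ j, θ' j ∈ 𝒜 1) →
      Module.Finite K (A ⧸ Ideal.span (Set.range θ')) →
      RingTheory.Sequence.IsRegular A (List.ofFn θ'))
    (hA1 : Module.finrank K (𝒜 1) ≤ n) :
    ∃ J : Ideal (MvPolynomial (Fin n) K),
      IsStableMonomialIdeal J ∧
      (∀ e : ℕ, ringKrullDim (MvPolynomial (Fin n) K ⧸ J) = e →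
        ∀ θ' : Fin e → MvPolynomial (Fin n) K ⧸ J,
          (∀ j, θ' j ∈ Submodule.map (Ideal.Quotient.mkₐ K J).toLinearMap
            (homogeneousSubmodule (Fin n) K 1)) →
          Module.Finite K ((MvPolynomial (Fin n) K ⧸ J) ⧸ Ideal.span (Set.range θ')) →
          RingTheory.Sequence.IsRegular (MvPolynomial (Fin n) K ⧸ J) (List.ofFn θ')) ∧
      (∀ i : ℕ,
        Module.finrank K
          (Submodule.map (Ideal.Quotient.mkₐ K J).toLinearMap
            (homogeneousSubmodule (Fin n) K i)) =
        Module.finrank K (𝒜 i)) := by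
  have h_adjoin := adjoin_eq_top_of_eq_pow hstd
  have := finiteType_of_adjoin_eq_top h_adjoin
  obtain ⟨θ, hθ, h_finite⟩ := exists_fin_finite_quotient_of_ringKrullDim_eq h_adjoin hdim
  exact exists_isStableMonomialIdeal_of_isRegular hstd hθ (hCM θ hθ h_finite) hA1

/-- **Lemma 3.3(i), Kubitzke–Murai.**
Let `S = K[x₁,…,x_n]`.  For any Cohen-Macaulay standard graded `K`-algebra `A` with
`dim_K A₁ ≤ n` (Cohen-Macaulayness being expressed by the statement that every linear system
of parameters is a regular sequence), there is a stable monomial ideal `J ⊆ S` such that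
`S/J` is Cohen-Macaulay and `S/J` has the same Hilbert series as `A` (the degree-`i`
component of `S/J` being the image of the homogeneous polynomials of degree `i` under the
quotient map). -/
theorem exists_stable_monomial_ideal_same_hilbert_series
    (K : Type*) [Field K] [CharZero K] (n : ℕ)
    (A : Type*) [CommRing A] [Algebra K A]
    (𝒜 : ℕ → Submodule K A) [GradedAlgebra 𝒜]
    (hstd : ∀ i, 𝒜 i = 𝒜 1 ^ i)
    (hfin : ∀ i, Module.Finite K (𝒜 i))
    (d : ℕ) (hdim : ringKrullDim A = d)
    (hCM : ∀ θ' : Fin d → A, (∀ j, θ' j ∈ 𝒜 1) →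
      Module.Finite K (A ⧸ Ideal.span (Set.range θ')) →
      RingTheory.Sequence.IsRegular A (List.ofFn θ'))
    (hA1 : Module.finrank K (𝒜 1) ≤ n) :
    ∃ J : Ideal (MvPolynomial (Fin n) K),
      IsStableMonomialIdeal J ∧
      (∀ e : ℕ, ringKrullDim (MvPolynomial (Fin n) K ⧸ J) = e →
        ∀ θ' : Fin e → MvPolynomial (Fin n) K ⧸ J,
          (∀ j, θ' j ∈ Submodule.map (Ideal.Quotient.mkₐ K J).toLinearMap
            (homogeneousSubmodule (Fin n) K 1)) →
          Module.Finite K ((MvPolynomial (Fin n) K ⧸ J) ⧸ Ideal.span (Set.range θ')) →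
          RingTheory.Sequence.IsRegular (MvPolynomial (Fin n) K ⧸ J) (List.ofFn θ')) ∧
      (∀ i : ℕ,
        Module.finrank K
          (Submodule.map (Ideal.Quotient.mkₐ K J).toLinearMap
            (homogeneousSubmodule (Fin n) K i)) =
        Module.finrank K (𝒜 i)) := by
  have : Infinite K := Infinite.of_injective (Nat.cast : ℕ → K) Nat.cast_injective
  have := hfin 1
  exact exists_stable_monomial_ideal_same_hilbert_series_general K n A 𝒜 hstd d hdim hCM hA1
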